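/- For any prime power q and genus g ≥ 2, a_{[1²]}|_g := Σ_{C ∈ Hyp_g(F_q)} (1/|Aut_{F_q}(C)|) · a_1(C)² equals q^{2g} − 1, where a_1(C) = q + 1 − |C(F_q)|; in particular for q = 2, g = 5 this sum equals 1023. -/

import Mathlib

open Polynomial

noncomputable section

/-- ψ_n(A)(q) = (cx+d)^n q((ax+b)/(cx+d)) over an arbitrary field. -/
def psiF {F : Type*} [Field F] (n : ℕ) (A : Matrix (Fin 2) (Fin 2) F)
    (q : Polynomial F) : Polynomial F :=
  ∑ i ∈ Finset.range (n + 1),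
    C (q.coeff i) * (C (A 0 0) * X + C (A 0 1)) ^ i * (C (A 1 0) * X + C (A 1 1)) ^ (n - i)

/-- The affine chart y² + Qy = P is nonsingular over the algebraic closure of F. -/
def SmoothChartF {F : Type*} [Field F] (Q P : Polynomial F) : Prop :=
  ∀ x y : AlgebraicClosure F,
    ¬(y ^ 2 + aeval x Q * y - aeval x P = 0 ∧ 2 * y + aeval x Q = 0 ∧
      aeval x (derivative Q) * y - aeval x (derivative P) = 0)

/-- (Q, P) is a standard model of a hyperelliptic curve of genus g over F_q:
the degree window 2g+1 ≤ max{2 deg Q, deg P} ≤ 2g+2 holds, both charts of the standard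
projective model y² + Q(x)y = P(x) (the chart at infinity being obtained by
x ↦ 1/x, y ↦ y/x^{g+1}, i.e. reversing the coefficients of Q and P) are nonsingular over
the algebraic closure of F, and the defining equation stays irreducible over the algebraic
closure (the double cover does not split). -/
def IsHypModel {F : Type*} [Field F] (g : ℕ) (Q P : Polynomial F) : Prop :=
  2 * g + 1 ≤ max (2 * Q.natDegree) P.natDegree ∧
  max (2 * Q.natDegree) P.natDegree ≤ 2 * g + 2 ∧
  SmoothChartF Q P ∧
  SmoothChartF (reflect (g + 1) Q) (reflect (2 * g + 2) P) ∧
  ¬∃ u : Polynomial (AlgebraicClosure F),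
      u ^ 2 + Q.map (algebraMap F (AlgebraicClosure F)) * u =
        P.map (algebraMap F (AlgebraicClosure F))

/-- A standard hyperelliptic equation of genus g over F. -/
def HypEq (F : Type*) [Field F] (g : ℕ) :=
  {QP : Polynomial F × Polynomial F // IsHypModel g QP.1 QP.2}

/-- The datum (A, e, r) transforms the curve y² + Q₁y = P₁ into y² + Q₂y = P₂ via the
change of variables (x, y) ↦ ((ax+b)/(cx+d), (r(x) + e·y)/(cx+d)^{g+1}). -/
def IsoTriple {F : Type*} [Field F] (g : ℕ) (A : Matrix (Fin 2) (Fin 2) F) (e : F)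
    (r : Polynomial F) (Q₁ P₁ Q₂ P₂ : Polynomial F) : Prop :=
  e ≠ 0 ∧ r.natDegree ≤ g + 1 ∧
  C e * Q₁ = 2 * r + psiF (g + 1) A Q₂ ∧
  C (e ^ 2) * P₁ = psiF (2 * g + 2) A P₂ - r ^ 2 - psiF (g + 1) A Q₂ * r

/-- Two standard hyperelliptic equations define F-isomorphic curves. -/
def IsomRel {F : Type*} [Field F] (g : ℕ) (C₁ C₂ : HypEq F g) : Prop :=
  ∃ (A : Matrix.GeneralLinearGroup (Fin 2) F) (e : F) (r : Polynomial F),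
    IsoTriple g (A : Matrix (Fin 2) (Fin 2) F) e r C₁.1.1 C₁.1.2 C₂.1.1 C₂.1.2

/-- Hyp_g(F): the set of F-isomorphism classes of hyperelliptic curves of genus g
over F. -/
def HypClass (F : Type*) [Field F] (g : ℕ) := Quot (IsomRel (F := F) g)

/-- The triples (A, e, r) inducing an automorphism of the curve (Q, P); they map
(q−1)-to-1 onto Aut_F(C), since (A,e,r) and (λA, λ^{g+1}e, λ^{g+1}r) induce the same
automorphism, so that |Aut_F(C)| = |AutTriples| / (q−1). -/
def AutTriples {F : Type*} [Field F] (g : ℕ) (C : HypEq F g) :=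
  {Aer : Matrix.GeneralLinearGroup (Fin 2) F × F × Polynomial F //
    IsoTriple g (Aer.1 : Matrix (Fin 2) (Fin 2) F) Aer.2.1 Aer.2.2
      C.1.1 C.1.2 C.1.1 C.1.2}

/-- The number of L-points of the smooth projective model of y² + Qy = P: affine points
plus the points at infinity (solutions of y² + b_{g+1}y = a_{2g+2} in the chart at
infinity at x = 0). -/
def nPoints {F : Type*} [Field F] (g : ℕ) (L : Type*) [Field L] [Algebra F L]
    (Q P : Polynomial F) : ℕ :=
  Nat.card {xy : L × L // xy.2 ^ 2 + aeval xy.1 Q * xy.2 = aeval xy.1 P} +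
  Nat.card {y : L //
    y ^ 2 + algebraMap F L (Q.coeff (g + 1)) * y = algebraMap F L (P.coeff (2 * g + 2))}

/-- Evaluation of the degree-`n` homogenization of `p` at `(a, b)`. -/
def hev {F : Type*} [Field F] {L : Type*} [CommRing L] [Algebra F L] (n : ℕ) (p : F[X])
    (a b : L) : L := MvPolynomial.aeval ![a, b] (p.homogenize n)

section hevLemmas
variable {F : Type*} [Field F] {L : Type*} [CommRing L] [Algebra F L]

lemma hev_eq_sum (n : ℕ) (p : F[X]) (a b : L) :
    hev n p a b = ∑ i ∈ Finset.range (n + 1), algebraMap F L (p.coeff i) * a ^ i * b ^ (n - i) := by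
  unfold hev homogenize
  rw [map_sum, Finset.Nat.sum_antidiagonal_eq_sum_range_succ_mk]
  refine Finset.sum_congr rfl fun i _ => ?_
  rw [MvPolynomial.aeval_monomial, Finsupp.prod_fintype _ _ (by simp)]
  simp [Fin.prod_univ_two, mul_assoc]

lemma hev_add (n : ℕ) (p q : F[X]) (a b : L) : hev n (p + q) a b = hev n p a b + hev n q a b := by
  simp [hev]

lemma hev_sub (n : ℕ) (p q : F[X]) (a b : L) : hev n (p - q) a b = hev n p a b - hev n q a b := by
  simp [hev]

lemma hev_neg (n : ℕ) (p : F[X]) (a b : L) : hev n (-p) a b = - hev n p a b := by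
  simp [hev]

lemma hev_Cmul (n : ℕ) (c : F) (p : F[X]) (a b : L) :
    hev n (C c * p) a b = algebraMap F L c * hev n p a b := by
  simp [hev]

lemma hev_two_mul (n : ℕ) (p : F[X]) (a b : L) : hev n (2 * p) a b = 2 * hev n p a b := by
  rw [two_mul, hev_add, two_mul]

lemma hev_mul {n m : ℕ} {p q : F[X]} (hp : p.natDegree ≤ n) (hq : q.natDegree ≤ m) (a b : L) :
    hev (n + m) (p * q) a b = hev n p a b * hev m q a b := by
  simp [hev, homogenize_mul p q hp hq]

lemma hev_mul_two {n : ℕ} {p q : F[X]} (hp : p.natDegree ≤ n) (hq : q.natDegree ≤ n) (a b : L) :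
    hev (2 * n) (p * q) a b = hev n p a b * hev n q a b := by
  rw [two_mul, hev_mul hp hq]

lemma hev_sq {n : ℕ} {p : F[X]} (hp : p.natDegree ≤ n) (a b : L) :
    hev (2 * n) (p ^ 2) a b = hev n p a b ^ 2 := by
  rw [sq, hev_mul_two hp hp, sq]

lemma hev_map {L' : Type*} [CommRing L'] [Algebra F L'] (f : L →ₐ[F] L') (n : ℕ) (p : F[X])
    (a b : L) : f (hev n p a b) = hev n p (f a) (f b) := by
  simp [hev_eq_sum]

lemma hev_one_right {n : ℕ} {p : F[X]} (hp : p.natDegree ≤ n) (x : L) :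
    hev n p x 1 = aeval x p := by
  unfold hev
  rw [aeval_homogenize_of_eq_one hp _ (by simp)]
  simp

lemma hev_one_zero (n : ℕ) (p : F[X]) : hev n p (1 : L) 0 = algebraMap F L (p.coeff n) := by
  rw [hev_eq_sum, Finset.sum_range_succ, Finset.sum_eq_zero]
  · simp
  · intro i hi
    have : n - i ≠ 0 := by have := Finset.mem_range.1 hi; omega
    simp [this]

lemma hev_scale (n : ℕ) (p : F[X]) (l a b : L) :
    hev n p (l * a) (l * b) = l ^ n * hev n p a b := by
  rw [hev_eq_sum, hev_eq_sum, Finset.mul_sum]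
  refine Finset.sum_congr rfl fun i hi => ?_
  have : l ^ n = l ^ i * l ^ (n - i) := by
    rw [← pow_add]; congr 1; have := Finset.mem_range.1 hi; omega
  rw [this, mul_pow, mul_pow]; ring

lemma hev_reflect {n : ℕ} {p : F[X]} (hp : p.natDegree ≤ n) (x : L) :
    aeval x (reflect n p) = hev n p 1 x := by
  have h2 : (reflect n p).natDegree ≤ n := natDegree_le_iff_coeff_eq_zero.2 fun i hi => by
    rw [coeff_reflect, revAt_eq_self_of_lt hi]
    exact coeff_eq_zero_of_natDegree_lt (lt_of_le_of_lt hp hi)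
  rw [← hev_one_right h2, hev_eq_sum, hev_eq_sum, ← Finset.sum_range_reflect]
  refine Finset.sum_congr rfl fun i hi => ?_
  have hi' : i ≤ n := by have := Finset.mem_range.1 hi; omega
  have e : n + 1 - 1 - i = n - i := by omega
  rw [e, coeff_reflect, revAt_le (by omega), Nat.sub_sub_self hi']
  simp

lemma psiF_eq_hev (n : ℕ) (A : Matrix (Fin 2) (Fin 2) F) (q : F[X]) :
    psiF n A q = hev n q (C (A 0 0) * X + C (A 0 1)) (C (A 1 0) * X + C (A 1 1)) := by
  rw [hev_eq_sum]; rfl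

lemma natDegree_psiF_le (n : ℕ) (A : Matrix (Fin 2) (Fin 2) F) (q : F[X]) :
    (psiF n A q).natDegree ≤ n := by
  refine natDegree_sum_le_of_forall_le _ _ fun i hi => ?_
  have hi' : i ≤ n := by have := Finset.mem_range.1 hi; omega
  have h1 : ∀ (a b : F) (k : ℕ), ((C a * X + C b) ^ k).natDegree ≤ k := fun a b k => by
    simpa using natDegree_pow_le_of_le k (natDegree_linear_le (a := a) (b := b))
  calc _ ≤ 0 + i + (n - i) := natDegree_mul_le_of_le
            (natDegree_mul_le_of_le (by simp) (h1 _ _ _)) (h1 _ _ _)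
    _ = n := by omega

lemma hev_linear (c d : F) (a b : L) :
    hev 1 (C c * X + C d) a b = algebraMap F L c * a + algebraMap F L d * b := by
  rw [hev_eq_sum]; simp [Finset.sum_range_succ, coeff_X, coeff_C]; ring

lemma hev_linear_pow (c d : F) (a b : L) (k : ℕ) :
    hev k ((C c * X + C d) ^ k) a b = (algebraMap F L c * a + algebraMap F L d * b) ^ k := by
  induction k with
  | zero => simp [hev]
  | succ k ih =>
    rw [pow_succ, hev_mul _ natDegree_linear_le, ih, hev_linear, pow_succ]
    simpa using natDegree_pow_le_of_le k (natDegree_linear_le (a := c) (b := d))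

lemma hev_finset_sum {ι : Type*} (s : Finset ι) (n : ℕ) (p : ι → F[X]) (a b : L) :
    hev n (∑ i ∈ s, p i) a b = ∑ i ∈ s, hev n (p i) a b := by
  simp [hev]

lemma hev_psiF (n : ℕ) (A : Matrix (Fin 2) (Fin 2) F) (q : F[X]) (a b : L) :
    hev n (psiF n A q) a b =
      hev n q (algebraMap F L (A 0 0) * a + algebraMap F L (A 0 1) * b)
        (algebraMap F L (A 1 0) * a + algebraMap F L (A 1 1) * b) := by
  unfold psiF
  rw [hev_finset_sum, hev_eq_sum n q]
  refine Finset.sum_congr rfl fun i hi => ?_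
  have hi' : i ≤ n := by have := Finset.mem_range.1 hi; omega
  have h1 : ∀ (a b : F) (k : ℕ), ((C a * X + C b) ^ k).natDegree ≤ k := fun a b k => by
    simpa using natDegree_pow_le_of_le k (natDegree_linear_le (a := a) (b := b))
  rw [mul_assoc, hev_Cmul]
  conv_lhs => rw [show n = i + (n - i) by omega]
  rw [hev_mul (h1 _ _ _), hev_linear_pow, Nat.add_sub_cancel_left, hev_linear_pow, mul_assoc]
  exact (h1 _ _ _).trans (by omega)

lemma psiF_psiF (n : ℕ) (A B : Matrix (Fin 2) (Fin 2) F) (q : F[X]) :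
    psiF n A (psiF n B q) = psiF n (B * A) q := by
  rw [psiF_eq_hev, hev_psiF, psiF_eq_hev]
  simp only [Matrix.mul_apply, Fin.sum_univ_two, map_add, map_mul]
  congr 1 <;> simp only [← C_eq_algebraMap] <;> ring

lemma psiF_one {n : ℕ} {q : F[X]} (hq : q.natDegree ≤ n) : psiF n 1 q = q := by
  rw [psiF_eq_hev]; simp [hev_one_right hq]

lemma psiF_add (n : ℕ) (A : Matrix (Fin 2) (Fin 2) F) (p q : F[X]) :
    psiF n A (p + q) = psiF n A p + psiF n A q := by simp only [psiF_eq_hev, hev_add]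
lemma psiF_sub (n : ℕ) (A : Matrix (Fin 2) (Fin 2) F) (p q : F[X]) :
    psiF n A (p - q) = psiF n A p - psiF n A q := by simp only [psiF_eq_hev, hev_sub]
lemma psiF_neg (n : ℕ) (A : Matrix (Fin 2) (Fin 2) F) (p : F[X]) :
    psiF n A (-p) = - psiF n A p := by simp only [psiF_eq_hev, hev_neg]
lemma psiF_Cmul (n : ℕ) (A : Matrix (Fin 2) (Fin 2) F) (c : F) (p : F[X]) :
    psiF n A (C c * p) = C c * psiF n A p := by
  simp only [psiF_eq_hev, hev_Cmul, ← C_eq_algebraMap]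
lemma psiF_two_mul (n : ℕ) (A : Matrix (Fin 2) (Fin 2) F) (p : F[X]) :
    psiF n A (2 * p) = 2 * psiF n A p := by simp only [psiF_eq_hev, hev_two_mul]
lemma psiF_mul_two {n : ℕ} (A : Matrix (Fin 2) (Fin 2) F) {p q : F[X]} (hp : p.natDegree ≤ n)
    (hq : q.natDegree ≤ n) : psiF (2 * n) A (p * q) = psiF n A p * psiF n A q := by
  simp only [psiF_eq_hev, hev_mul_two hp hq]

end hevLemmas

section smoothness
variable {F : Type*} [Field F]

/-- `(a, b, y)` is a singular point of the weighted-homogeneous curve: every first-order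
deformation of the point lies on the curve. -/
def SingAt (n : ℕ) (Q P : F[X]) (a b y : AlgebraicClosure F) : Prop :=
  ∀ α β υ : DualNumber (AlgebraicClosure F), α.fst = a → β.fst = b → υ.fst = y →
    υ ^ 2 + hev n Q α β * υ = hev (2 * n) P α β

/-- The whole projective model is smooth. -/
def SmoothH (n : ℕ) (Q P : F[X]) : Prop :=
  ∀ a b y : AlgebraicClosure F, (a ≠ 0 ∨ b ≠ 0) → ¬ SingAt n Q P a b y

/-- The F-algebra map `fst`. -/
def fstF (F : Type*) [Field F] :
    DualNumber (AlgebraicClosure F) →ₐ[F] AlgebraicClosure F :=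
  TrivSqZeroExt.fstHom F (AlgebraicClosure F) (AlgebraicClosure F)

lemma fstF_apply (x : DualNumber (AlgebraicClosure F)) : fstF F x = x.fst := rfl

lemma fst_hev (n : ℕ) (p : F[X]) (α β : DualNumber (AlgebraicClosure F)) :
    (hev n p α β).fst = hev n p α.fst β.fst := by
  simpa only [fstF_apply] using hev_map (fstF F) n p α β

lemma dual_mul_eq_zero {K : Type*} [Field K] {x y : DualNumber K} (hx : x.fst = 0)
    (hy : y.fst = 0) : x * y = 0 := by
  ext <;> simp [hx, hy]

lemma dual_isUnit {K : Type*} [Field K] {x : DualNumber K} (hx : x.fst ≠ 0) : IsUnit x := by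
  rw [TrivSqZeroExt.isUnit_iff_isUnit_fst]; exact isUnit_iff_ne_zero.2 hx

lemma aeval_dual (p : F[X]) (x x' : AlgebraicClosure F) :
    aeval (TrivSqZeroExt.inl x + TrivSqZeroExt.inr x' : DualNumber (AlgebraicClosure F)) p =
      TrivSqZeroExt.inl (aeval x p) + TrivSqZeroExt.inr (aeval x (derivative p) * x') := by
  have hin : ∀ q : F[X], aeval (TrivSqZeroExt.inl x : DualNumber (AlgebraicClosure F)) q =
      TrivSqZeroExt.inl (aeval x q) := fun q =>
    aeval_algHom_apply (TrivSqZeroExt.inlAlgHom F (AlgebraicClosure F) (AlgebraicClosure F)) x q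
  rw [aeval_add_of_sq_eq_zero _ _ _ (by rw [sq]; exact dual_mul_eq_zero (by simp) (by simp)),
    hin, hin, TrivSqZeroExt.inl_mul_inr, smul_eq_mul]

lemma singAt_scale {n : ℕ} {Q P : F[X]} {a b y l : AlgebraicClosure F} (hl : l ≠ 0)
    (h : SingAt n Q P a b y) : SingAt n Q P (l * a) (l * b) (l ^ n * y) := by
  intro α β υ hα hβ hυ
  have hu : ∀ z : DualNumber (AlgebraicClosure F),
      z = TrivSqZeroExt.inl l * (TrivSqZeroExt.inl l⁻¹ * z) := fun z => by
    rw [← mul_assoc, ← TrivSqZeroExt.inl_mul, mul_inv_cancel₀ hl]; simp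
  have hun : ∀ z : DualNumber (AlgebraicClosure F),
      z = TrivSqZeroExt.inl l ^ n * (TrivSqZeroExt.inl l⁻¹ ^ n * z) := fun z => by
    rw [← mul_assoc, ← mul_pow, ← TrivSqZeroExt.inl_mul, mul_inv_cancel₀ hl]; simp
  have := h (TrivSqZeroExt.inl l⁻¹ * α) (TrivSqZeroExt.inl l⁻¹ * β) (TrivSqZeroExt.inl l⁻¹ ^ n * υ)
    (by simp [hα, hl]) (by simp [hβ, hl])
    (by simp only [TrivSqZeroExt.fst_mul, TrivSqZeroExt.fst_pow, TrivSqZeroExt.fst_inl, hυ]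
        rw [← mul_assoc, ← mul_pow, inv_mul_cancel₀ hl]; simp)
  have s1 := hev_scale n Q (TrivSqZeroExt.inl l : DualNumber (AlgebraicClosure F))
    (TrivSqZeroExt.inl l⁻¹ * α) (TrivSqZeroExt.inl l⁻¹ * β)
  have s2 := hev_scale (2 * n) P (TrivSqZeroExt.inl l : DualNumber (AlgebraicClosure F))
    (TrivSqZeroExt.inl l⁻¹ * α) (TrivSqZeroExt.inl l⁻¹ * β)
  rw [← hu, ← hu] at s1 s2
  rw [s1, s2, hun υ]
  generalize TrivSqZeroExt.inl l⁻¹ * α = α' at *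
  generalize TrivSqZeroExt.inl l⁻¹ * β = β' at *
  generalize TrivSqZeroExt.inl l⁻¹ ^ n * υ = υ' at *
  rw [mul_comm 2 n, pow_mul, mul_comm n 2, ← this]; ring

lemma singAt_affine_iff {n : ℕ} {Q P : F[X]} (hQ : Q.natDegree ≤ n) (hP : P.natDegree ≤ 2 * n)
    (x y : AlgebraicClosure F) : SingAt n Q P x 1 y ↔
    (y ^ 2 + aeval x Q * y - aeval x P = 0 ∧ 2 * y + aeval x Q = 0 ∧
      aeval x (derivative Q) * y - aeval x (derivative P) = 0) := by
  have key : ∀ x' y' : AlgebraicClosure F,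
      ((TrivSqZeroExt.inl y + TrivSqZeroExt.inr y' : DualNumber (AlgebraicClosure F)) ^ 2 +
        hev n Q (TrivSqZeroExt.inl x + TrivSqZeroExt.inr x' : DualNumber (AlgebraicClosure F)) 1 *
        (TrivSqZeroExt.inl y + TrivSqZeroExt.inr y') =
      hev (2 * n) P (TrivSqZeroExt.inl x + TrivSqZeroExt.inr x' : DualNumber (AlgebraicClosure F)) 1)
      ↔ (y ^ 2 + aeval x Q * y = aeval x P ∧
        (2 * y + aeval x Q) * y' + (aeval x (derivative Q) * y - aeval x (derivative P)) * x' = 0)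
      := by
    intro x' y'
    rw [hev_one_right hQ, hev_one_right hP, aeval_dual, aeval_dual, TrivSqZeroExt.ext_iff]
    refine and_congr ?_ ?_
    · simp
    · simp [sq]
      rw [← sub_eq_zero]
      ring_nf
  constructor
  · intro h
    have h0 := (key 0 1).1 (h _ _ _ (by simp) (by simp) (by simp))
    have h1 := (key 1 0).1 (h _ _ _ (by simp) (by simp) (by simp))
    refine ⟨sub_eq_zero.2 h0.1, by simpa using h0.2, by simpa using h1.2⟩
  · rintro ⟨h1, h2, h3⟩ α β υ hα hβ hυ
    have hβu : IsUnit β := dual_isUnit (by rw [hβ]; exact one_ne_zero)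
    obtain ⟨u, rfl⟩ := hβu
    set γ : DualNumber (AlgebraicClosure F) := ↑u⁻¹ with hγ
    have hγf : γ.fst = 1 := by
      have : (γ * ↑u).fst = 1 := by rw [hγ, Units.inv_mul]; simp
      rw [TrivSqZeroExt.fst_mul, hβ, mul_one] at this; exact this
    have hug : (u : DualNumber (AlgebraicClosure F)) * γ = 1 := by rw [hγ, Units.mul_inv]
    have hd : ∀ z : DualNumber (AlgebraicClosure F),
        TrivSqZeroExt.inl z.fst + TrivSqZeroExt.inr z.snd = z := TrivSqZeroExt.inl_fst_add_inr_snd_eq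
    have := (key (γ * α).snd (γ ^ n * υ).snd).2 ⟨sub_eq_zero.1 h1, by rw [h2, h3]; ring⟩
    have e1 : (γ * α).fst = x := by simp [hγf, hα]
    have e2 : (γ ^ n * υ).fst = y := by simp [hγf, hυ]
    have r1 := hd (γ * α)
    have r2 := hd (γ ^ n * υ)
    rw [e1] at r1
    rw [e2] at r2
    rw [r1, r2] at this
    have ha : α = ↑u * (γ * α) := by rw [← mul_assoc, hug, one_mul]
    have hb : (u : DualNumber (AlgebraicClosure F)) = ↑u * 1 := by rw [mul_one]
    have hc : υ = ↑u ^ n * (γ ^ n * υ) := by rw [← mul_assoc, ← mul_pow, hug, one_pow, one_mul]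
    have s1 := hev_scale n Q (u : DualNumber (AlgebraicClosure F)) (γ * α) 1
    have s2 := hev_scale (2 * n) P (u : DualNumber (AlgebraicClosure F)) (γ * α) 1
    rw [← ha, ← hb] at s1 s2
    rw [s1, s2, hc, mul_comm 2 n, pow_mul, mul_comm n 2, ← this]
    generalize γ ^ n * υ = υ'
    ring

lemma natDegree_reflect_le' {n : ℕ} {p : F[X]} (hp : p.natDegree ≤ n) :
    (reflect n p).natDegree ≤ n := natDegree_le_iff_coeff_eq_zero.2 fun i hi => by
  rw [coeff_reflect, revAt_eq_self_of_lt hi]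
  exact coeff_eq_zero_of_natDegree_lt (lt_of_le_of_lt hp hi)

lemma hev_reflect' {L : Type*} [CommRing L] [Algebra F L] {n : ℕ} {p : F[X]} (a b : L) :
    hev n (reflect n p) a b = hev n p b a := by
  rw [hev_eq_sum, hev_eq_sum, ← Finset.sum_range_reflect]
  refine Finset.sum_congr rfl fun i hi => ?_
  have hi' : i ≤ n := by have := Finset.mem_range.1 hi; omega
  have e : n + 1 - 1 - i = n - i := by omega
  rw [e, coeff_reflect, revAt_le (by omega), Nat.sub_sub_self hi']
  ring

lemma singAt_reflect {n : ℕ} {Q P : F[X]} {a b y : AlgebraicClosure F} :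
    SingAt n (reflect n Q) (reflect (2 * n) P) a b y ↔ SingAt n Q P b a y := by
  simp only [SingAt, hev_reflect']
  constructor
  · intro h α β υ h1 h2 h3; exact h β α υ h2 h1 h3
  · intro h α β υ h1 h2 h3; exact h β α υ h2 h1 h3

lemma smoothChartF_iff {n : ℕ} {Q P : F[X]} (hQ : Q.natDegree ≤ n) (hP : P.natDegree ≤ 2 * n) :
    SmoothChartF Q P ↔ ∀ x y, ¬ SingAt n Q P x 1 y := by
  simp only [SmoothChartF, singAt_affine_iff hQ hP]

lemma smoothH_iff {n : ℕ} {Q P : F[X]} (hQ : Q.natDegree ≤ n) (hP : P.natDegree ≤ 2 * n) :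
    SmoothH n Q P ↔ SmoothChartF Q P ∧ SmoothChartF (reflect n Q) (reflect (2 * n) P) := by
  rw [smoothChartF_iff hQ hP, smoothChartF_iff (natDegree_reflect_le' hQ)
    (natDegree_reflect_le' hP)]
  simp only [singAt_reflect]
  constructor
  · intro h
    exact ⟨fun x y => h _ _ _ (by simp), fun x y => h _ _ _ (by simp)⟩
  · rintro ⟨h1, h2⟩ a b y (ha | hb) hs
    · have := singAt_scale (inv_ne_zero ha) hs
      rw [inv_mul_cancel₀ ha] at this
      exact h2 _ _ this
    · have := singAt_scale (inv_ne_zero hb) hs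
      rw [inv_mul_cancel₀ hb] at this
      exact h1 _ _ this

lemma isHypModel_iff {g : ℕ} {Q P : F[X]} : IsHypModel g Q P ↔
    Q.natDegree ≤ g + 1 ∧ P.natDegree ≤ 2 * (g + 1) ∧ SmoothH (g + 1) Q P := by
  constructor
  · rintro ⟨h1, h2, h3, h4, h5⟩
    have hQ : Q.natDegree ≤ g + 1 := by have := le_max_left (2 * Q.natDegree) P.natDegree; omega
    have hP : P.natDegree ≤ 2 * (g + 1) := by
      have := le_max_right (2 * Q.natDegree) P.natDegree; omega
    exact ⟨hQ, hP, (smoothH_iff hQ hP).2 ⟨h3, h4⟩⟩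
  · rintro ⟨hQ, hP, hs⟩
    have hs' := (smoothH_iff hQ hP).1 hs
    refine ⟨?_, ?_, hs'.1, hs'.2, ?_⟩
    · by_contra hlt
      have hlt1 := lt_of_le_of_lt (le_max_left _ _) (not_le.1 hlt)
      have hlt2 := lt_of_le_of_lt (le_max_right _ _) (not_le.1 hlt)
      have c1 : Q.coeff (g + 1) = 0 := coeff_eq_zero_of_natDegree_lt (by omega)
      have c2 : P.coeff (2 * (g + 1)) = 0 := coeff_eq_zero_of_natDegree_lt (by omega)
      have c3 : P.coeff (2 * (g + 1) - 1) = 0 := coeff_eq_zero_of_natDegree_lt (by omega)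
      refine hs'.2 0 0 ⟨?_, ?_, ?_⟩
      · simp [← coeff_zero_eq_aeval_zero', coeff_reflect, c2]
      · simp [← coeff_zero_eq_aeval_zero', coeff_reflect, c1]
      · simp [← coeff_zero_eq_aeval_zero', coeff_reflect, coeff_derivative]
        rw [revAt_le (by omega)]
        exact c3
    · exact max_le (by omega) (by omega)
    · rintro ⟨u, hu⟩
      set K := AlgebraicClosure F with hK
      set i : F →+* K := algebraMap F K with hi
      set Qk := Q.map i with hQk
      have hud : u.natDegree ≤ g + 1 := by
        by_contra hlt
        push Not at hlt
        have hQd : Qk.natDegree < u.natDegree := lt_of_le_of_lt (natDegree_map_le) (by omega)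
        have hd : (u + Qk).natDegree = u.natDegree := natDegree_add_eq_left_of_natDegree_lt hQd
        have hu0 : u ≠ 0 := by rintro rfl; simp at hlt
        have huq0 : u + Qk ≠ 0 := by
          intro h0; rw [h0] at hd; simp at hd; omega
        have : (P.map i).natDegree = u.natDegree + u.natDegree := by
          rw [← hu, show u ^ 2 + Qk * u = u * (u + Qk) by ring, natDegree_mul hu0 huq0, hd]
        have h2 : (P.map i).natDegree ≤ P.natDegree := natDegree_map_le
        omega
      have hQkd : Qk.natDegree ≤ g + 1 := natDegree_map_le.trans hQ
      have hPkd : (P.map i).natDegree ≤ 2 * (g + 1) := natDegree_map_le.trans hP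
      -- a zero of 2u+Q
      have hz : ∃ a b : K, (a ≠ 0 ∨ b ≠ 0) ∧ hev (g + 1) (2 * u + Qk) a b = 0 := by
        by_cases hc : (2 * u + Qk).coeff (g + 1) = 0
        · exact ⟨1, 0, by simp, by rw [hev_one_zero, hc]; simp⟩
        · have hdeg : (2 * u + Qk).natDegree ≤ g + 1 :=
            natDegree_add_le_of_degree_le ((natDegree_mul_le_of_le (n := g + 1) (m := 0)
              (natDegree_ofNat 2).le hud).trans (by omega)) hQkd
          have h2 := le_natDegree_of_ne_zero hc
          obtain ⟨x, hx⟩ := IsAlgClosed.exists_root (2 * u + Qk) (by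
            intro h0
            have : (2 * u + Qk).natDegree = 0 := natDegree_eq_of_degree_eq_some h0
            omega)
          exact ⟨x, 1, by simp, by rw [hev_one_right hdeg]; simpa using hx⟩
      obtain ⟨a, b, hab, h0⟩ := hz
      refine hs a b (hev (g + 1) u a b) hab ?_
      intro α β υ hα hβ hυ
      have hmap : ∀ (n : ℕ) (p : F[X]), hev n p α β = hev n (p.map i) α β := by
        intro n p
        rw [hev_eq_sum, hev_eq_sum]
        refine Finset.sum_congr rfl fun j _ => ?_
        rw [coeff_map]
        rfl
      have hfst : ∀ (n : ℕ) (p : K[X]), (hev n p α β).fst = hev n p a b := by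
        intro n p
        have := hev_map (TrivSqZeroExt.fstHom K K K) n p α β
        simp only [TrivSqZeroExt.fstHom_apply] at this
        rw [this, hα, hβ]
      rw [hmap, hmap, ← hu, hev_add, hev_sq hud, hev_mul_two hQkd hud, ← sub_eq_zero]
      have e : υ ^ 2 + hev (g + 1) Qk α β * υ - (hev (g + 1) u α β ^ 2 +
          hev (g + 1) Qk α β * hev (g + 1) u α β) =
          (υ - hev (g + 1) u α β) * (υ + hev (g + 1) u α β + hev (g + 1) Qk α β) := by ring
      rw [e]
      refine dual_mul_eq_zero ?_ ?_
      · simp [hfst, hυ]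
      · rw [hev_add, hev_two_mul] at h0
        simp only [TrivSqZeroExt.fst_add, hfst, hυ]
        rw [← h0]; ring

end smoothness

section isoLemmas
variable {F : Type*} [Field F]

/-- The same as `IsoTriple`, for weight `n`. -/
def IsoN (n : ℕ) (A : Matrix (Fin 2) (Fin 2) F) (e : F)
    (r : F[X]) (Q₁ P₁ Q₂ P₂ : F[X]) : Prop :=
  e ≠ 0 ∧ r.natDegree ≤ n ∧
  C e * Q₁ = 2 * r + psiF n A Q₂ ∧
  C (e ^ 2) * P₁ = psiF (2 * n) A P₂ - r ^ 2 - psiF n A Q₂ * r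

lemma isoTriple_iff {g : ℕ} {A : Matrix (Fin 2) (Fin 2) F} {e : F} {r Q₁ P₁ Q₂ P₂ : F[X]} :
    IsoTriple g A e r Q₁ P₁ Q₂ P₂ ↔ IsoN (g + 1) A e r Q₁ P₁ Q₂ P₂ := Iff.rfl

lemma isoN_hev {n : ℕ} {A : Matrix (Fin 2) (Fin 2) F} {e : F} {r Q₁ P₁ Q₂ P₂ : F[X]}
    (h : IsoN n A e r Q₁ P₁ Q₂ P₂) {L : Type*} [CommRing L] [Algebra F L] (a b : L) :
    algebraMap F L e * hev n Q₁ a b = 2 * hev n r a b +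
      hev n Q₂ (algebraMap F L (A 0 0) * a + algebraMap F L (A 0 1) * b)
        (algebraMap F L (A 1 0) * a + algebraMap F L (A 1 1) * b) ∧
    algebraMap F L e ^ 2 * hev (2 * n) P₁ a b =
      hev (2 * n) P₂ (algebraMap F L (A 0 0) * a + algebraMap F L (A 0 1) * b)
        (algebraMap F L (A 1 0) * a + algebraMap F L (A 1 1) * b) - hev n r a b ^ 2 -
      hev n Q₂ (algebraMap F L (A 0 0) * a + algebraMap F L (A 0 1) * b)
        (algebraMap F L (A 1 0) * a + algebraMap F L (A 1 1) * b) * hev n r a b := by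
  obtain ⟨_, hr, h1, h2⟩ := h
  constructor
  · rw [← hev_Cmul, h1, hev_add, hev_two_mul, hev_psiF]
  · rw [← map_pow, ← hev_Cmul, h2, hev_sub, hev_sub, hev_psiF, hev_sq hr,
      hev_mul_two (natDegree_psiF_le _ _ _) hr, hev_psiF]

lemma isoN_comp {n : ℕ} {A B : Matrix (Fin 2) (Fin 2) F} {e f : F}
    {r s Q₁ P₁ Q₂ P₂ Q₃ P₃ : F[X]}
    (h : IsoN n A e r Q₁ P₁ Q₂ P₂) (h' : IsoN n B f s Q₂ P₂ Q₃ P₃) :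
    IsoN n (B * A) (e * f) (C f * r + psiF n A s) Q₁ P₁ Q₃ P₃ := by
  obtain ⟨he, hr, h1, h2⟩ := h
  obtain ⟨hf, hs, h3, h4⟩ := h'
  have h3' := congrArg (psiF n A) h3
  have h4' := congrArg (psiF (2 * n) A) h4
  rw [psiF_Cmul, psiF_add, psiF_two_mul, psiF_psiF] at h3'
  rw [psiF_Cmul, psiF_sub, psiF_sub, psiF_psiF, sq s, psiF_mul_two _ hs hs,
    psiF_mul_two _ (natDegree_psiF_le _ _ _) hs, psiF_psiF] at h4'
  refine ⟨mul_ne_zero he hf, ?_, ?_, ?_⟩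
  · exact natDegree_add_le_of_degree_le ((natDegree_C_mul_le _ _).trans hr)
      (natDegree_psiF_le _ _ _)
  · rw [C_mul]
    linear_combination C f * h1 + h3'
  · rw [C_pow] at h2 h4' ⊢
    rw [C_mul]
    linear_combination (C f) ^ 2 * h2 + h4' - (C f * r) * h3'

lemma isoN_inv {n : ℕ} {A B : Matrix (Fin 2) (Fin 2) F} (hAB : A * B = 1) {e : F}
    {r Q₁ P₁ Q₂ P₂ : F[X]} (hQ₂ : Q₂.natDegree ≤ n) (hP₂ : P₂.natDegree ≤ 2 * n)
    (h : IsoN n A e r Q₁ P₁ Q₂ P₂) :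
    IsoN n B e⁻¹ (-(C e⁻¹ * psiF n B r)) Q₂ P₂ Q₁ P₁ := by
  obtain ⟨he, hr, h1, h2⟩ := h
  have h1' := congrArg (psiF n B) h1
  have h2' := congrArg (psiF (2 * n) B) h2
  rw [psiF_Cmul, psiF_add, psiF_two_mul, psiF_psiF, hAB, psiF_one hQ₂] at h1'
  rw [psiF_Cmul, psiF_sub, psiF_sub, psiF_psiF, sq r, psiF_mul_two _ hr hr,
    psiF_mul_two _ (natDegree_psiF_le _ _ _) hr, psiF_psiF, hAB, psiF_one hQ₂,
    psiF_one hP₂] at h2'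
  have hc : C e⁻¹ * C e = (1 : F[X]) := by rw [← C_mul, inv_mul_cancel₀ he, C_1]
  refine ⟨inv_ne_zero he, ?_, ?_, ?_⟩
  · rw [natDegree_neg]
    exact (natDegree_C_mul_le _ _).trans (natDegree_psiF_le _ _ _)
  · linear_combination (-C e⁻¹) * h1' + (psiF n B Q₁) * hc
  · rw [C_pow] at h2' ⊢
    linear_combination (-(C e⁻¹) ^ 2) * h2' - (C e⁻¹ ^ 2 * psiF n B r) * h1' +
      (psiF (2 * n) B P₁ * (C e⁻¹ * C e + 1) + C e⁻¹ * psiF n B r * psiF n B Q₁) * hc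

lemma isoN_smooth {n : ℕ} {A B : Matrix (Fin 2) (Fin 2) F} (hAB : A * B = 1) {e : F}
    {r Q₁ P₁ Q₂ P₂ : F[X]}
    (h : IsoN n A e r Q₁ P₁ Q₂ P₂) (hs : SmoothH n Q₁ P₁) : SmoothH n Q₂ P₂ := by
  let K := AlgebraicClosure F
  intro (a : K) (b : K) (y : K) hab hsing
  have he := h.1
  set i : F →+* K := algebraMap F K with hi
  have hie : i e ≠ 0 := by simpa using he
  have m00 : i (A 0 0) * i (B 0 0) + i (A 0 1) * i (B 1 0) = 1 := by
    have := congrArg i (congrFun (congrFun hAB 0) 0)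
    simpa [Matrix.mul_apply] using this
  have m01 : i (A 0 0) * i (B 0 1) + i (A 0 1) * i (B 1 1) = 0 := by
    have := congrArg i (congrFun (congrFun hAB 0) 1)
    simpa [Matrix.mul_apply] using this
  have m10 : i (A 1 0) * i (B 0 0) + i (A 1 1) * i (B 1 0) = 0 := by
    have := congrArg i (congrFun (congrFun hAB 1) 0)
    simpa [Matrix.mul_apply] using this
  have m11 : i (A 1 0) * i (B 0 1) + i (A 1 1) * i (B 1 1) = 1 := by
    have := congrArg i (congrFun (congrFun hAB 1) 1)
    simpa [Matrix.mul_apply] using this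
  set a' := i (B 0 0) * a + i (B 0 1) * b with ha'
  set b' := i (B 1 0) * a + i (B 1 1) * b with hb'
  have ea : i (A 0 0) * a' + i (A 0 1) * b' = a := by
    rw [ha', hb']; linear_combination a * m00 + b * m01
  have eb : i (A 1 0) * a' + i (A 1 1) * b' = b := by
    rw [ha', hb']; linear_combination a * m10 + b * m11
  refine hs a' b' ((i e)⁻¹ * (y - hev n r a' b')) ?_ ?_
  · by_contra hcon
    push Not at hcon
    rw [hcon.1, hcon.2] at ea eb
    simp only [mul_zero, add_zero] at ea eb
    rcases hab with h | h
    · exact h ea.symm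
    · exact h eb.symm
  · intro α β υ hα hβ hυ
    obtain ⟨h1, h2⟩ := isoN_hev h α β
    have hamap : ∀ c : F, (algebraMap F (DualNumber K) c).fst = i c := fun c => rfl
    have := hsing _ _ (algebraMap F (DualNumber K) e * υ + hev n r α β)
      (show (algebraMap F (DualNumber K) (A 0 0) * α + algebraMap F (DualNumber K) (A 0 1) * β).fst
        = a by simp only [TrivSqZeroExt.fst_add, TrivSqZeroExt.fst_mul, hamap, hα, hβ]; exact ea)
      (show (algebraMap F (DualNumber K) (A 1 0) * α + algebraMap F (DualNumber K) (A 1 1) * β).fst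
        = b by simp only [TrivSqZeroExt.fst_add, TrivSqZeroExt.fst_mul, hamap, hα, hβ]; exact eb)
      (by
        simp only [TrivSqZeroExt.fst_add, TrivSqZeroExt.fst_mul, hamap, hυ, fst_hev, hα, hβ]
        rw [← mul_assoc, mul_inv_cancel₀ hie]; ring)
    have hu : IsUnit (algebraMap F (DualNumber K) e ^ 2) :=
      ((isUnit_iff_ne_zero.2 he).map (algebraMap F (DualNumber K))).pow 2
    refine hu.mul_left_cancel ?_
    linear_combination this + (algebraMap F (DualNumber K) e * υ) * h1 - h2

lemma isoN_exists {n : ℕ} (A : Matrix (Fin 2) (Fin 2) F) {e : F} (he : e ≠ 0)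
    {r : F[X]} (hr : r.natDegree ≤ n) (Q₂ P₂ : F[X]) :
    ∃ Q₁ P₁ : F[X], Q₁.natDegree ≤ n ∧ P₁.natDegree ≤ 2 * n ∧ IsoN n A e r Q₁ P₁ Q₂ P₂ := by
  refine ⟨C e⁻¹ * (2 * r + psiF n A Q₂),
    C (e ^ 2)⁻¹ * (psiF (2 * n) A P₂ - r ^ 2 - psiF n A Q₂ * r), ?_, ?_, he, hr, ?_, ?_⟩
  · refine (natDegree_C_mul_le _ _).trans (natDegree_add_le_of_degree_le ?_
      (natDegree_psiF_le _ _ _))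
    exact (natDegree_mul_le_of_le (n := n) (m := 0) (natDegree_ofNat 2).le hr).trans (by omega)
  · refine (natDegree_C_mul_le _ _).trans ((natDegree_sub_le_of_le (natDegree_sub_le_of_le
      (natDegree_psiF_le _ _ _) (natDegree_pow_le_of_le 2 hr)) (n := 2 * n) ?_).trans (by simp))
    exact (natDegree_mul_le_of_le (natDegree_psiF_le _ _ _) hr).trans (by omega)
  · rw [← mul_assoc, ← C_mul, mul_inv_cancel₀ he]; simp
  · rw [← mul_assoc, ← C_mul, mul_inv_cancel₀ (pow_ne_zero 2 he)]; simp

lemma isoN_unique {n : ℕ} {A : Matrix (Fin 2) (Fin 2) F} {e : F} {r Q P Q' P' Q₂ P₂ : F[X]}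
    (h : IsoN n A e r Q P Q₂ P₂) (h' : IsoN n A e r Q' P' Q₂ P₂) : Q = Q' ∧ P = P' := by
  have he := h.1
  constructor
  · exact mul_left_cancel₀ (C_ne_zero.2 he) (h.2.2.1.trans h'.2.2.1.symm)
  · exact mul_left_cancel₀ (C_ne_zero.2 (pow_ne_zero 2 he)) (h.2.2.2.trans h'.2.2.2.symm)

end isoLemmas

section chiLemmas
variable {F : Type*} [Field F]

/-- Number of roots of `y² + b y = c`, minus one. -/
def chi (b c : F) : ℚ := (Nat.card {y : F // y ^ 2 + b * y = c} : ℚ) - 1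

lemma chi_change {e r b₁ c₁ b₂ c₂ : F} (he : e ≠ 0) (h1 : e * b₁ = 2 * r + b₂)
    (h2 : e ^ 2 * c₁ = c₂ - r ^ 2 - b₂ * r) : chi b₁ c₁ = chi b₂ c₂ := by
  unfold chi
  congr 2
  refine Nat.card_congr ⟨fun y => ⟨e * y.1 + r, ?_⟩, fun y => ⟨e⁻¹ * (y.1 - r), ?_⟩, ?_, ?_⟩
  · linear_combination e ^ 2 * y.2 - e * y.1 * h1 + h2
  · refine mul_left_cancel₀ (pow_ne_zero 2 he) ?_
    have hi : e * e⁻¹ = 1 := mul_inv_cancel₀ he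
    linear_combination y.2 + (y.1 - r) * h1 - h2 +
      ((e * e⁻¹ + 1) * (y.1 - r) ^ 2 + e * b₁ * (y.1 - r)) * hi
  · intro y; ext; simp [he]
  · intro y; ext; simp [he]

variable [Fintype F]

lemma chi_double {b c : F} (h : b ^ 2 + 4 * c = 0) : chi b c = 0 := by
  have : Nat.card {y : F // y ^ 2 + b * y = c} = 1 := by
    obtain ⟨z, hz1, hz2⟩ : ∃ z : F, 2 * z + b = 0 ∧ z ^ 2 + b * z = c := by
      by_cases h2 : (2 : F) = 0
      · have : CharP F 2 := CharTwo.of_one_ne_zero_of_two_eq_zero one_ne_zero h2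
        have hb : b = 0 := by
          have h4 : (4 : F) = 0 := by linear_combination 2 * h2
          rw [h4] at h; simpa using h
        obtain ⟨z, hz⟩ := surjective_frobenius F 2 c
        refine ⟨z, by rw [h2, hb]; ring, ?_⟩
        rw [frobenius_def] at hz
        rw [hb, hz]; ring
      · refine ⟨-b / 2, by field_simp; ring, ?_⟩
        have h4 : (4 : F) ≠ 0 := by
          rw [show (4 : F) = 2 * 2 by norm_num]; exact mul_ne_zero h2 h2
        field_simp
        linear_combination -h
    rw [Nat.card_eq_one_iff_unique]
    refine ⟨⟨fun x y => ?_⟩, ⟨⟨z, hz2⟩⟩⟩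
    have key : ∀ w : F, w ^ 2 + b * w = c → w = z := fun w hw => by
      have : (w - z) ^ 2 = 0 := by linear_combination hw - hz2 + (z - w) * hz1
      exact sub_eq_zero.1 (pow_eq_zero_iff (two_ne_zero) |>.1 this)
    ext
    rw [key _ x.2, key _ y.2]
  simp [chi, this]

open Classical in
lemma chi_eq_sum (b c : F) : chi b c = (∑ y : F, if y ^ 2 + b * y = c then (1 : ℚ) else 0) - 1 := by
  simp [chi, Fintype.card_subtype]

lemma sum_chi (b : F) : ∑ c : F, chi b c = 0 := by
  classical
  simp only [chi_eq_sum, Finset.sum_sub_distrib]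
  rw [Finset.sum_comm]
  simp

lemma sum_chi_sq : ∑ b : F, ∑ c : F, chi b c ^ 2 =
    (Fintype.card F : ℚ) ^ 2 - Fintype.card F := by
  classical
  have h1 : ∀ b c : F, chi b c ^ 2 = (∑ y : F, ∑ z : F, if y ^ 2 + b * y = c then
      (if z ^ 2 + b * z = c then (1 : ℚ) else 0) else 0) - 2 * chi b c - 1 := by
    intro b c
    rw [chi_eq_sum]
    have : (∑ y : F, ∑ z : F, if y ^ 2 + b * y = c then
      (if z ^ 2 + b * z = c then (1 : ℚ) else 0) else 0) =
      (∑ y : F, if y ^ 2 + b * y = c then (1 : ℚ) else 0) ^ 2 := by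
      rw [sq, Finset.sum_mul_sum]
      refine Finset.sum_congr rfl fun y _ => Finset.sum_congr rfl fun z _ => ?_
      split_ifs <;> simp
    rw [this]; ring
  have h2 : ∀ b : F, ∑ c : F, chi b c ^ 2 = (∑ y : F, ∑ z : F, 
      if z ^ 2 + b * z = y ^ 2 + b * y then (1 : ℚ) else 0) - Fintype.card F := by
    intro b
    simp only [h1, Finset.sum_sub_distrib, ← Finset.mul_sum, sum_chi]
    rw [Finset.sum_comm]
    simp only [mul_zero, sub_zero, Finset.sum_const, Finset.card_univ, nsmul_eq_mul, mul_one]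
    congr 1
    refine Finset.sum_congr rfl fun y _ => ?_
    rw [Finset.sum_comm]
    refine Finset.sum_congr rfl fun z _ => ?_
    simp
  simp only [h2, Finset.sum_sub_distrib]
  rw [Finset.sum_comm]
  have h3 : ∀ y : F, ∑ b : F, ∑ z : F, (if z ^ 2 + b * z = y ^ 2 + b * y then (1 : ℚ) else 0) =
      Fintype.card F + (Fintype.card F - 1) := by
    intro y
    rw [Finset.sum_comm, ← Finset.add_sum_erase _ _ (Finset.mem_univ y)]
    congr 1
    · simp
    · have : ∀ z ∈ Finset.univ.erase y, ∑ b : F,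
          (if z ^ 2 + b * z = y ^ 2 + b * y then (1 : ℚ) else 0) = 1 := by
        intro z hz
        have hzy : z - y ≠ 0 := sub_ne_zero.2 (Finset.ne_of_mem_erase hz)
        have : ∀ b : F, (z ^ 2 + b * z = y ^ 2 + b * y) ↔ b = -(y + z) := by
          intro b
          constructor
          · intro h
            have : (z - y) * (b + (y + z)) = 0 := by linear_combination h
            rcases mul_eq_zero.1 this with h | h
            · exact absurd h hzy
            · linear_combination h
          · rintro rfl; ring
        simp [this]
      rw [Finset.sum_congr rfl this]
      simp [Finset.card_erase_of_mem, Nat.cast_sub (Fintype.card_pos (α := F))]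
  simp only [h3]
  simp
  ring

end chiLemmas

section decLemmas
variable {F : Type*} [Field F]

/-- Substituting `y = h y' + r` in `y² + Q y = P` gives `h²` times `y'² + Q' y' = P'`. -/
def Dec (h r Q' P' Q P : F[X]) : Prop :=
  h * Q' = 2 * r + Q ∧ h ^ 2 * P' = P - r ^ 2 - Q * r

lemma natDegree_of_monic_mul {h q : F[X]} (hh : h.Monic) {n : ℕ} (hn : h.natDegree ≤ n)
    (h1 : (h * q).natDegree ≤ n) : q.natDegree ≤ n - h.natDegree := by
  by_cases hq : q = 0
  · simp [hq]
  · rw [hh.natDegree_mul' hq] at h1; omega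

lemma dec_degree {h r Q' P' Q P : F[X]} {n : ℕ} (hd : Dec h r Q' P' Q P) (hh : h.Monic)
    (hn : h.natDegree ≤ n) (hr : r.degree < h.degree) (hQ : Q.natDegree ≤ n)
    (hP : P.natDegree ≤ 2 * n) :
    Q'.natDegree ≤ n - h.natDegree ∧ P'.natDegree ≤ 2 * (n - h.natDegree) ∧
    Q'.coeff (n - h.natDegree) = Q.coeff n ∧ P'.coeff (2 * (n - h.natDegree)) = P.coeff (2 * n) := by
  obtain ⟨h1, h2⟩ := hd
  have hrn : r.natDegree ≤ n := (natDegree_le_natDegree hr.le).trans hn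
  have hrc : r.coeff n = 0 := coeff_eq_zero_of_degree_lt (lt_of_lt_of_le hr (by
    rw [degree_eq_natDegree hh.ne_zero]; exact_mod_cast hn))
  have d1 : (2 * r + Q).natDegree ≤ n := natDegree_add_le_of_degree_le
    ((natDegree_mul_le_of_le (n := n) (m := 0) (natDegree_ofNat 2).le hrn).trans (by omega)) hQ
  have hr2 : (r ^ 2).natDegree ≤ 2 * n := natDegree_pow_le_of_le 2 hrn
  have hqr : (Q * r).natDegree ≤ 2 * n := (natDegree_mul_le_of_le hQ hrn).trans (by omega)
  have d2 : (P - r ^ 2 - Q * r).natDegree ≤ 2 * n :=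
    (natDegree_sub_le_of_le (natDegree_sub_le_of_le hP hr2) hqr).trans (by simp)
  have hh2 : (h ^ 2).Monic := hh.pow 2
  have hh2d : (h ^ 2).natDegree = 2 * h.natDegree := hh.natDegree_pow 2
  have b1 : Q'.natDegree ≤ n - h.natDegree := natDegree_of_monic_mul hh hn (by rw [h1]; exact d1)
  have b2 : P'.natDegree ≤ 2 * n - (h ^ 2).natDegree :=
    natDegree_of_monic_mul hh2 (by omega) (by rw [h2]; exact d2)
  have b2' : P'.natDegree ≤ 2 * (n - h.natDegree) := by omega
  refine ⟨b1, b2', ?_, ?_⟩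
  · have : (h * Q').coeff (h.natDegree + (n - h.natDegree)) =
        (2 * r + Q).coeff (h.natDegree + (n - h.natDegree)) := by rw [h1]
    rw [coeff_mul_add_eq_of_natDegree_le le_rfl b1, Nat.add_sub_cancel' hn, hh.coeff_natDegree,
      coeff_add, coeff_ofNat_mul, hrc] at this
    simpa using this
  · have : (h ^ 2 * P').coeff ((h ^ 2).natDegree + 2 * (n - h.natDegree)) =
        (P - r ^ 2 - Q * r).coeff ((h ^ 2).natDegree + 2 * (n - h.natDegree)) := by rw [h2]
    rw [coeff_mul_add_eq_of_natDegree_le le_rfl b2', hh2.coeff_natDegree,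
      show (h ^ 2).natDegree + 2 * (n - h.natDegree) = 2 * n by omega, coeff_sub, coeff_sub,
      two_mul n, sq, coeff_mul_add_eq_of_natDegree_le hrn hrn, coeff_mul_add_eq_of_natDegree_le hQ hrn,
      hrc] at this
    simpa [two_mul] using this

lemma dec_back {h r Q' P' : F[X]} {n : ℕ} (hh : h.Monic)
    (hn : h.natDegree ≤ n) (hr : r.degree < h.degree) (hQ : Q'.natDegree ≤ n - h.natDegree)
    (hP : P'.natDegree ≤ 2 * (n - h.natDegree)) :
    (h * Q' - 2 * r).natDegree ≤ n ∧
      (h ^ 2 * P' + r ^ 2 + (h * Q' - 2 * r) * r).natDegree ≤ 2 * n ∧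
      Dec h r Q' P' (h * Q' - 2 * r) (h ^ 2 * P' + r ^ 2 + (h * Q' - 2 * r) * r) := by
  have hrn : r.natDegree ≤ n := (natDegree_le_natDegree hr.le).trans hn
  have hh2d : (h ^ 2).natDegree = 2 * h.natDegree := hh.natDegree_pow 2
  have b1 : (h * Q' - 2 * r).natDegree ≤ n := by
    refine (natDegree_sub_le_of_le (m := n) (n := n) ?_ ?_).trans (by simp)
    · exact (natDegree_mul_le_of_le le_rfl hQ).trans (by omega)
    · exact (natDegree_mul_le_of_le (n := n) (m := 0) (natDegree_ofNat 2).le hrn).trans (by omega)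
  refine ⟨b1, ?_, by ring, by ring⟩
  refine natDegree_add_le_of_degree_le (natDegree_add_le_of_degree_le ?_ ?_) ?_
  · exact (natDegree_mul_le_of_le le_rfl hP).trans (by omega)
  · exact natDegree_pow_le_of_le 2 hrn
  · exact (natDegree_mul_le_of_le b1 hrn).trans (by omega)

lemma dvd_of_sq_relation {k t c w : F[X]} (hk : k ≠ 0) (h : t ^ 2 = t * (k * c) + k ^ 2 * w) :
    k ∣ t := by
  classical
  obtain ⟨t', ht⟩ := EuclideanDomain.gcd_dvd_left t k
  obtain ⟨k', hk'⟩ := EuclideanDomain.gcd_dvd_right t k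
  set g := EuclideanDomain.gcd t k with hg
  have hg0 : g ≠ 0 := by rintro h0; rw [h0] at hk'; simp at hk'; exact hk hk'
  have hcop : IsCoprime t' k' := by
    have hb := EuclideanDomain.gcd_eq_gcd_ab t k
    rw [← hg] at hb
    refine ⟨EuclideanDomain.gcdA t k, EuclideanDomain.gcdB t k, ?_⟩
    refine mul_left_cancel₀ hg0 ?_
    linear_combination -hb - EuclideanDomain.gcdA t k * ht - EuclideanDomain.gcdB t k * hk'
  have h2 : t' ^ 2 = k' * (t' * c + k' * w) := by
    refine mul_left_cancel₀ (pow_ne_zero 2 hg0) ?_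
    have h' := h
    rw [ht, hk'] at h'
    linear_combination h'
  have h3 : k' ∣ t' ^ 2 := ⟨_, h2⟩
  have h4 : IsUnit k' := (IsCoprime.pow_left hcop (m := 2)).isUnit_of_dvd' h3 dvd_rfl
  obtain ⟨u, hu⟩ := h4
  refine ⟨↑u⁻¹ * t', ?_⟩
  rw [ht, hk', ← hu, mul_assoc, ← mul_assoc (u : F[X]), Units.mul_inv, one_mul]

lemma no_root_isUnit {a : F[X]} (h : ∀ x : AlgebraicClosure F, aeval x a ≠ 0) : IsUnit a := by
  by_contra hu
  have : (a.map (algebraMap F (AlgebraicClosure F))).degree ≠ 0 := by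
    rw [degree_map]
    intro h0
    exact hu (isUnit_iff_degree_eq_zero.2 h0)
  obtain ⟨x, hx⟩ := IsAlgClosed.exists_root _ this
  exact h x (by rwa [IsRoot.def, eval_map_algebraMap] at hx)

lemma coprime_part_unit {a₁ a₂ s Q₁ P₁ Q₂ P₂ : F[X]} (hc : IsCoprime a₁ a₂)
    (h1 : a₁ * Q₁ - 2 * s = a₂ * Q₂)
    (h2 : s ^ 2 - s * (a₁ * Q₁) - a₁ ^ 2 * P₁ = - (a₂ ^ 2 * P₂)) (hs : SmoothChartF Q₁ P₁) :
    IsUnit a₂ := by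
  refine no_root_isUnit fun x hx => ?_
  have ha1 : aeval x a₁ ≠ 0 := by
    intro h0
    obtain ⟨u, v, huv⟩ := hc
    have := congrArg (aeval x) huv
    simp [h0, hx] at this
  have e1 := congrArg (aeval x) h1
  have e2 := congrArg (aeval x) h2
  have e3 := congrArg (fun p => aeval x (derivative p)) h2
  simp only [derivative_sub, derivative_mul, derivative_pow, derivative_neg, map_sub, map_mul,
    map_pow, map_add, map_neg, hx, map_ofNat, Nat.cast_ofNat, derivative_ofNat] at e1 e2 e3
  norm_num at e1 e2 e3
  refine hs x (-(aeval x s) / aeval x a₁) ⟨?_, ?_, ?_⟩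
  · field_simp
    linear_combination e2
  · field_simp
    linear_combination e1
  · field_simp
    refine mul_left_cancel₀ (pow_ne_zero 2 ha1) ?_
    linear_combination (aeval x a₁) * e3
      + (aeval x (derivative s) * aeval x a₁ - (aeval x (derivative a₁)) * aeval x s) * e1
      - 2 * (aeval x (derivative a₁)) * e2

lemma dec_unique {h₁ r₁ Q₁ P₁ h₂ r₂ Q₂ P₂ Q P : F[X]} (hd1 : Dec h₁ r₁ Q₁ P₁ Q P)
    (hd2 : Dec h₂ r₂ Q₂ P₂ Q P) (hm1 : h₁.Monic) (hm2 : h₂.Monic) (hr1 : r₁.degree < h₁.degree)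
    (hr2 : r₂.degree < h₂.degree) (hs1 : SmoothChartF Q₁ P₁) (hs2 : SmoothChartF Q₂ P₂) :
    h₁ = h₂ ∧ r₁ = r₂ ∧ Q₁ = Q₂ ∧ P₁ = P₂ := by
  classical
  obtain ⟨a₁, ha1⟩ := EuclideanDomain.gcd_dvd_left h₁ h₂
  obtain ⟨a₂, ha2⟩ := EuclideanDomain.gcd_dvd_right h₁ h₂
  set k := EuclideanDomain.gcd h₁ h₂ with hk
  have hk0 : k ≠ 0 := by rintro h0; rw [h0] at ha1; simp at ha1; exact hm1.ne_zero ha1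
  have hcop : IsCoprime a₁ a₂ := by
    have hb := EuclideanDomain.gcd_eq_gcd_ab h₁ h₂
    rw [← hk] at hb
    refine ⟨EuclideanDomain.gcdA h₁ h₂, EuclideanDomain.gcdB h₁ h₂, ?_⟩
    refine mul_left_cancel₀ hk0 ?_
    linear_combination -hb - EuclideanDomain.gcdA h₁ h₂ * ha1 - EuclideanDomain.gcdB h₁ h₂ * ha2
  obtain ⟨e1, e2⟩ := hd1
  obtain ⟨f1, f2⟩ := hd2
  have key : (r₁ - r₂) ^ 2 = (r₁ - r₂) * (h₁ * Q₁) + (h₁ ^ 2 * P₁ - h₂ ^ 2 * P₂) := by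
    linear_combination (r₂ - r₁) * e1 - e2 + f2
  have hkt : k ∣ r₁ - r₂ := by
    refine dvd_of_sq_relation (c := a₁ * Q₁) (w := a₁ ^ 2 * P₁ - a₂ ^ 2 * P₂) hk0 ?_
    rw [key, ha1, ha2]; ring
  obtain ⟨s, hs⟩ := hkt
  have g1 : a₁ * Q₁ - 2 * s = a₂ * Q₂ := by
    refine mul_left_cancel₀ hk0 ?_
    linear_combination e1 - f1 + 2 * hs - Q₁ * ha1 + Q₂ * ha2
  have g2 : s ^ 2 - s * (a₁ * Q₁) - a₁ ^ 2 * P₁ = - (a₂ ^ 2 * P₂) := by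
    refine mul_left_cancel₀ (pow_ne_zero 2 hk0) ?_
    have key' := key
    rw [hs, ha1, ha2] at key'
    linear_combination key'
  have u2 : IsUnit a₂ := coprime_part_unit hcop g1 g2 hs1
  have u1 : IsUnit a₁ := by
    refine coprime_part_unit (s := -s) (Q₂ := Q₁) (P₂ := P₁) hcop.symm ?_ ?_ hs2
    · linear_combination -g1
    · linear_combination -g2 - s * g1
  have hh : h₁ = h₂ := by
    refine eq_of_monic_of_associated hm1 hm2 ?_
    rw [ha1, ha2]
    exact (associated_mul_unit_left k a₁ u1).trans (associated_mul_unit_right k a₂ u2)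
  have hr : r₁ = r₂ := by
    have hd : h₁ ∣ r₁ - r₂ := by
      rw [ha1, hs]
      exact mul_dvd_mul_left k u1.dvd
    have := eq_zero_of_dvd_of_degree_lt hd (lt_of_le_of_lt (degree_sub_le _ _)
      (max_lt hr1 (by rw [hh]; exact hr2)))
    exact sub_eq_zero.1 this
  subst hh hr
  refine ⟨rfl, rfl, ?_, ?_⟩
  · exact mul_left_cancel₀ hm1.ne_zero (e1.trans f1.symm)
  · exact mul_left_cancel₀ (pow_ne_zero 2 hm1.ne_zero) (e2.trans f2.symm)

variable [Fintype F]

lemma exists_poly_of_sing {Q P : F[X]} {x y : AlgebraicClosure F}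
    (h1 : y ^ 2 + aeval x Q * y - aeval x P = 0) (h2 : 2 * y + aeval x Q = 0) :
    ∃ r : F[X], aeval x r = y := by
  by_cases hc : (2 : F) = 0
  · have hchF : CharP F 2 := CharTwo.of_one_ne_zero_of_two_eq_zero one_ne_zero hc
    have hchK : CharP (AlgebraicClosure F) 2 := charP_of_injective_algebraMap
      (algebraMap F (AlgebraicClosure F)).injective 2
    have hxi : IsIntegral F x := Algebra.IsIntegral.isIntegral x
    have hfd : FiniteDimensional F (IntermediateField.adjoin F {x}) :=
      IntermediateField.adjoin.finiteDimensional hxi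
    have hfin : Finite (IntermediateField.adjoin F {x}) := Module.finite_of_finite F
    have hchE : CharP (IntermediateField.adjoin F {x}) 2 := charP_of_injective_algebraMap
      (algebraMap F (IntermediateField.adjoin F {x})).injective 2
    obtain ⟨z, hz⟩ := surjective_frobenius (IntermediateField.adjoin F {x}) 2
      (aeval (IntermediateField.AdjoinSimple.gen F x) P)
    have hz' : (z : AlgebraicClosure F) ^ 2 = aeval x P := by
      have := congrArg (algebraMap (IntermediateField.adjoin F {x}) (AlgebraicClosure F)) hz
      rw [frobenius_def, map_pow, ← aeval_algebraMap_apply,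
        IntermediateField.AdjoinSimple.algebraMap_gen] at this
      exact this
    have h2K : (2 : AlgebraicClosure F) = 0 := CharTwo.two_eq_zero
    have hzy : (z : AlgebraicClosure F) = y := by
      have hq : aeval x Q = 0 := by rw [h2K] at h2; simpa using h2
      rw [hq] at h1
      have : ((z : AlgebraicClosure F) - y) ^ 2 = 0 := by
        linear_combination hz' - h1 + (y ^ 2 - z * y) * h2K
      exact sub_eq_zero.1 (pow_eq_zero_iff (two_ne_zero) |>.1 this)
    have hmem : y ∈ Algebra.adjoin F {x} := by
      rw [← IntermediateField.adjoin_simple_toSubalgebra_of_isAlgebraic hxi.isAlgebraic, ← hzy]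
      exact z.2
    rw [Algebra.adjoin_singleton_eq_range_aeval] at hmem
    obtain ⟨r, hr⟩ := hmem
    exact ⟨r, hr⟩
  · have h2K : (2 : AlgebraicClosure F) ≠ 0 := by
      intro h0
      apply hc
      apply (algebraMap F (AlgebraicClosure F)).injective
      rw [map_ofNat, map_zero]; exact h0
    refine ⟨C (-(2 : F)⁻¹) * Q, ?_⟩
    simp only [map_mul, aeval_C, map_neg, map_inv₀, map_ofNat]
    field_simp
    linear_combination -h2

lemma exists_admissible {Q P : F[X]} (hns : ¬ SmoothChartF Q P) :
    ∃ h r Q' P' : F[X], h.Monic ∧ 0 < h.natDegree ∧ r.degree < h.degree ∧ Dec h r Q' P' Q P := by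
  unfold SmoothChartF at hns
  push Not at hns
  obtain ⟨x, y, h1, h2, h3⟩ := hns
  obtain ⟨r₀, hr₀⟩ := exists_poly_of_sing h1 h2
  have hxi : IsIntegral F x := Algebra.IsIntegral.isIntegral x
  set p := minpoly F x with hp
  have hm : p.Monic := minpoly.monic hxi
  set r := r₀ %ₘ p with hr
  have hrx : aeval x r = y := by rw [hr, hp, ← hr₀]; exact aeval_modByMonic_eq_self_of_root (minpoly.aeval F x)
  have d1 : p ∣ 2 * r + Q := minpoly.dvd F x (by rw [map_add, map_mul, hrx, map_ofNat]; exact h2)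
  have d2 : p ∣ P - r ^ 2 - Q * r := minpoly.dvd F x (by simp [hrx]; linear_combination -h1)
  obtain ⟨w, hw⟩ := d2
  have hsep : p.Separable := PerfectField.separable_of_irreducible (minpoly.irreducible hxi)
  have hdp : aeval x (derivative p) ≠ 0 := by
    intro h0
    obtain ⟨u, v, huv⟩ := hsep
    have := congrArg (aeval x) huv
    rw [map_add, map_mul, map_mul, h0, (minpoly.aeval F x : aeval x p = 0)] at this
    simp at this
  have hw0 : aeval x w = 0 := by
    have := congrArg (fun q => aeval x (derivative q)) hw
    simp only [derivative_sub, derivative_mul, derivative_pow, map_sub, map_mul,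
      map_pow, map_add, hrx, Nat.cast_ofNat] at this
    have hpx : aeval x p = 0 := minpoly.aeval F x
    rw [hpx] at this
    have h2m : algebraMap F (AlgebraicClosure F) 2 = 2 := map_ofNat _ 2
    norm_num [h2m] at this
    refine (mul_eq_zero.1 (?_ : aeval x (derivative p) * aeval x w = 0)).resolve_left hdp
    linear_combination -this - (aeval x (derivative r)) * h2 - h3
  obtain ⟨w', hw'⟩ := minpoly.dvd F x hw0
  obtain ⟨Q', hQ'⟩ := d1
  refine ⟨p, r, Q', w', hm, minpoly.natDegree_pos hxi, degree_modByMonic_lt _ hm, hQ'.symm, ?_⟩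
  rw [hw, hw', ← hp]; ring

lemma dec_exists (n : ℕ) : ∀ Q P : F[X], Q.natDegree ≤ n → P.natDegree ≤ 2 * n →
    (Q.coeff n) ^ 2 + 4 * P.coeff (2 * n) ≠ 0 →
    ∃ h r Q' P' : F[X], h.Monic ∧ h.natDegree ≤ n ∧ r.degree < h.degree ∧
      Q'.natDegree ≤ n - h.natDegree ∧ P'.natDegree ≤ 2 * (n - h.natDegree) ∧
      SmoothChartF Q' P' ∧ Dec h r Q' P' Q P := by
  induction n using Nat.strong_induction_on with
  | _ n ih =>
  intro Q P hQ hP hdisc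
  by_cases hs : SmoothChartF Q P
  · refine ⟨1, 0, Q, P, monic_one, by simp, by simp, by simpa using hQ, by simpa using hP, hs, ?_, ?_⟩
    · ring
    · ring
  · obtain ⟨p, r, Q₁, P₁, hm, hp0, hr, hd⟩ := exists_admissible hs
    have hpn : p.natDegree ≤ n := by
      have hdiv : p ^ 2 ∣ Q ^ 2 + 4 * P := by
        refine ⟨Q₁ ^ 2 + 4 * P₁, ?_⟩
        linear_combination (-(p * Q₁) - (2 * r + Q)) * hd.1 - 4 * hd.2
      have hc : (Q ^ 2 + 4 * P).coeff (2 * n) ≠ 0 := by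
        rw [coeff_add, coeff_ofNat_mul]
        conv_lhs => rw [two_mul n, sq, coeff_mul_add_eq_of_natDegree_le hQ hQ, ← sq, ← two_mul n]
        simpa using hdisc
      have hne : Q ^ 2 + 4 * P ≠ 0 := by intro h0; rw [h0] at hc; simp at hc
      have hle := natDegree_le_of_dvd hdiv hne
      rw [hm.natDegree_pow] at hle
      have h4 : (Q ^ 2 + 4 * P).natDegree ≤ 2 * n := natDegree_add_le_of_degree_le
        (natDegree_pow_le_of_le 2 hQ)
        ((natDegree_mul_le_of_le (n := 2 * n) (m := 0) (natDegree_ofNat 4).le hP).trans (by omega))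
      omega
    obtain ⟨b1, b2, c1, c2⟩ := dec_degree hd hm hpn hr hQ hP
    obtain ⟨h', r', Q', P', hm', hn', hr', hQ', hP', hs', hd'⟩ :=
      ih (n - p.natDegree) (by omega) Q₁ P₁ b1 b2 (by rw [c1, c2]; exact hdisc)
    have hdeg : (p * h').natDegree = p.natDegree + h'.natDegree := hm.natDegree_mul hm'
    refine ⟨p * h', r + p * r', Q', P', hm.mul hm', by omega, ?_, by rw [hdeg]; convert hQ' using 1; omega,
      by rw [hdeg]; convert hP' using 2; omega, hs', ?_, ?_⟩
    · rw [degree_mul]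
      refine lt_of_le_of_lt (degree_add_le _ _) (max_lt ?_ ?_)
      · refine lt_of_lt_of_le hr ?_
        rw [degree_eq_natDegree hm.ne_zero, degree_eq_natDegree hm'.ne_zero]
        exact_mod_cast Nat.le_add_right _ _
      · rw [degree_mul, degree_eq_natDegree hm.ne_zero]
        exact WithBot.add_lt_add_left (by simp) hr'
    · linear_combination p * hd'.1 + hd.1
    · linear_combination p ^ 2 * hd'.2 + hd.2 - p * r' * hd.1

end decLemmas

section countLemmas
variable {F : Type*} [Field F] [Fintype F]

lemma finite_PL (d : ℕ) : {p : F[X] | p.degree < d}.Finite := by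
  have : Finite (degreeLT F d) := Finite.of_equiv _ (degreeLTEquiv F d).toEquiv.symm
  have h : {p : F[X] | p.degree < d} = (degreeLT F d : Set F[X]) := by
    ext p; simp [mem_degreeLT]
  rw [h]; exact Set.toFinite _

variable (F) in
/-- Polynomials of degree less than `d`. -/
def PL (d : ℕ) : Finset F[X] := (finite_PL (F := F) d).toFinset

lemma mem_PL {d : ℕ} {p : F[X]} : p ∈ PL F d ↔ p.degree < d := by simp [PL]

lemma mem_PL_succ {d : ℕ} {p : F[X]} : p ∈ PL F (d + 1) ↔ p.natDegree ≤ d := by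
  rw [mem_PL, natDegree_le_iff_degree_le, ← Order.lt_succ_iff]
  rfl

lemma card_PL (d : ℕ) : (PL F d).card = Fintype.card F ^ d := by
  have h1 : Nat.card (degreeLT F d) = Fintype.card F ^ d := by
    rw [Nat.card_congr (degreeLTEquiv F d).toEquiv]; simp
  rw [← h1, PL, ← Nat.card_eq_card_finite_toFinset]
  refine Nat.card_congr (Equiv.subtypeEquivRight fun p => ?_)
  simp [mem_degreeLT]

lemma sum_PL_shift {d : ℕ} {u : F[X]} (hu : u ∈ PL F d) (f : F[X] → ℚ) :
    ∑ p ∈ PL F d, f (p + u) = ∑ p ∈ PL F d, f p := by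
  rw [mem_PL] at hu
  refine Finset.sum_bij' (fun p _ => p + u) (fun p _ => p - u) ?_ ?_ ?_ ?_ ?_
  · intro p hp; rw [mem_PL] at *; exact lt_of_le_of_lt (degree_add_le _ _) (max_lt hp hu)
  · intro p hp; rw [mem_PL] at *; exact lt_of_le_of_lt (degree_sub_le _ _) (max_lt hp hu)
  · intro p _; simp
  · intro p _; simp
  · intro p _; rfl

lemma card_F_ne : (Fintype.card F : ℚ) ≠ 0 := by
  have : 0 < Fintype.card F := Fintype.card_pos
  positivity

lemma sum_PL_top (d : ℕ) (f : F → ℚ) :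
    ∑ p ∈ PL F (d + 1), f (p.coeff d) = (Fintype.card F : ℚ) ^ d * ∑ b, f b := by
  refine mul_left_cancel₀ (card_F_ne (F := F)) ?_
  have h1 : ∀ b : F, ∑ p ∈ PL F (d + 1), f (p.coeff d) =
      ∑ p ∈ PL F (d + 1), f (p.coeff d + b) := by
    intro b
    have hb : (C b * X ^ d : F[X]) ∈ PL F (d + 1) := mem_PL_succ.2 (natDegree_C_mul_X_pow_le b d)
    rw [← sum_PL_shift hb]
    simp
  have h2 : ∀ a : F, ∑ b, f (a + b) = ∑ b, f b := fun a =>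
    Fintype.sum_equiv (Equiv.addLeft a) _ _ fun b => rfl
  calc _ = ∑ b : F, ∑ p ∈ PL F (d + 1), f (p.coeff d) := by simp
    _ = ∑ b : F, ∑ p ∈ PL F (d + 1), f (p.coeff d + b) := Finset.sum_congr rfl fun b _ => h1 b
    _ = _ := by
      rw [Finset.sum_comm]
      simp only [h2, Finset.sum_const, card_PL, nsmul_eq_mul]
      push_cast; ring

lemma sum_PL_bot {d : ℕ} (hd : d ≠ 0) (f g : F → ℚ) (hg : ∑ b, g b = 0) :
    ∑ p ∈ PL F (d + 1), f (p.coeff d) * g (p.coeff 0) = 0 := by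
  refine (mul_eq_zero.1 (?_ : (Fintype.card F : ℚ) * _ = 0)).resolve_left (card_F_ne (F := F))
  have h1 : ∀ b : F, ∑ p ∈ PL F (d + 1), f (p.coeff d) * g (p.coeff 0) =
      ∑ p ∈ PL F (d + 1), f (p.coeff d) * g (p.coeff 0 + b) := by
    intro b
    have hb : (C b : F[X]) ∈ PL F (d + 1) := mem_PL_succ.2 (by simp)
    rw [← sum_PL_shift hb]
    simp [coeff_C, hd]
  have h2 : ∀ a : F, ∑ b, g (a + b) = 0 := fun a => by
    rw [← hg]; exact Fintype.sum_equiv (Equiv.addLeft a) _ _ fun b => rfl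
  calc _ = ∑ b : F, ∑ p ∈ PL F (d + 1), f (p.coeff d) * g (p.coeff 0) := by simp
    _ = ∑ b : F, ∑ p ∈ PL F (d + 1), f (p.coeff d) * g (p.coeff 0 + b) :=
      Finset.sum_congr rfl fun b _ => h1 b
    _ = _ := by
      rw [Finset.sum_comm]
      simp only [← Finset.mul_sum, h2, mul_zero, Finset.sum_const_zero]

open Classical in
variable (F) in
/-- Monic polynomials of degree `d`. -/
def Mon (d : ℕ) : Finset F[X] := (PL F d).image (fun p => X ^ d + p)

lemma mem_Mon {d : ℕ} {h : F[X]} : h ∈ Mon F d ↔ h.Monic ∧ h.natDegree = d := by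
  classical
  simp only [Mon, Finset.mem_image, mem_PL]
  constructor
  · rintro ⟨p, hp, rfl⟩
    refine ⟨monic_X_pow_add hp, ?_⟩
    rw [natDegree_add_eq_left_of_degree_lt (by rw [degree_X_pow]; exact hp), natDegree_X_pow]
  · rintro ⟨hm, hd⟩
    refine ⟨h - X ^ d, ?_, by ring⟩
    have := degree_sub_lt_left (p := h) (q := X ^ d) (by
      rw [degree_X_pow, degree_eq_natDegree hm.ne_zero, hd]) hm.ne_zero (by
      rw [hm.leadingCoeff, leadingCoeff_X_pow])
    rwa [degree_eq_natDegree hm.ne_zero, hd] at this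

lemma card_Mon (d : ℕ) : (Mon F d).card = Fintype.card F ^ d := by
  classical
  rw [Mon, Finset.card_image_of_injective _ (add_right_injective _), card_PL]

open Classical in
lemma card_Mon_zero (d : ℕ) :
    ((Mon F (d + 1)).filter (fun h => h.coeff 0 = 0)).card = Fintype.card F ^ d := by
  rw [← card_Mon, ← Finset.card_image_of_injective (Mon F d) (mul_right_injective₀ (X_ne_zero (R := F)))]
  congr 1
  ext h
  simp only [Finset.mem_filter, Finset.mem_image, mem_Mon]
  constructor
  · rintro ⟨⟨hm, hd⟩, h0⟩
    obtain ⟨k, rfl⟩ := X_dvd_iff.2 h0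
    have hk : k.Monic := Monic.of_mul_monic_left monic_X hm
    refine ⟨k, ⟨hk, ?_⟩, rfl⟩
    rw [monic_X.natDegree_mul hk, natDegree_X] at hd
    omega
  · rintro ⟨k, ⟨hk, hd⟩, rfl⟩
    refine ⟨⟨monic_X.mul hk, ?_⟩, by simp⟩
    rw [monic_X.natDegree_mul hk, natDegree_X]; omega

open Classical in
lemma card_Mon_nonzero (d : ℕ) :
    (((Mon F (d + 1)).filter (fun h => h.coeff 0 ≠ 0)).card : ℚ) =
      (Fintype.card F : ℚ) ^ (d + 1) - (Fintype.card F : ℚ) ^ d := by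
  have := Finset.card_filter_add_card_filter_not (s := Mon F (d + 1)) (fun h => h.coeff 0 = 0)
  rw [card_Mon_zero, card_Mon] at this
  have h2 : ((Fintype.card F ^ d + _ : ℕ) : ℚ) = _ := congrArg Nat.cast this
  push_cast at h2
  linarith

open Classical in
variable (F) in
/-- Affinely smooth pairs with degree bounds. -/
def Ysm (n : ℕ) : Finset (F[X] × F[X]) :=
  (PL F (n + 1) ×ˢ PL F (2 * n + 1)).filter (fun x => SmoothChartF x.1 x.2)

lemma mem_Ysm {n : ℕ} {x : F[X] × F[X]} : x ∈ Ysm F n ↔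
    (x.1.natDegree ≤ n ∧ x.2.natDegree ≤ 2 * n) ∧ SmoothChartF x.1 x.2 := by
  simp [Ysm, mem_PL_succ]

/-- Reconstruct `(Q, P)` from `((h, r), (Q', P'))`. -/
def phi (t : (F[X] × F[X]) × (F[X] × F[X])) : F[X] × F[X] :=
  (t.1.1 * t.2.1 - 2 * t.1.2,
    t.1.1 ^ 2 * t.2.2 + t.1.2 ^ 2 + (t.1.1 * t.2.1 - 2 * t.1.2) * t.1.2)

variable (F) in
/-- Index set of decompositions with `deg h = d`. -/
def Dst (n d : ℕ) : Finset ((F[X] × F[X]) × (F[X] × F[X])) :=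
  (Mon F d ×ˢ PL F d) ×ˢ Ysm F (n - d)

lemma Dst_spec {n d : ℕ} (hd : d ≤ n) {t : (F[X] × F[X]) × (F[X] × F[X])} (ht : t ∈ Dst F n d) :
    t.1.1.Monic ∧ t.1.1.natDegree = d ∧ t.1.2.degree < t.1.1.degree ∧
    SmoothChartF t.2.1 t.2.2 ∧ (phi t).1.natDegree ≤ n ∧ (phi t).2.natDegree ≤ 2 * n ∧
    Dec t.1.1 t.1.2 t.2.1 t.2.2 (phi t).1 (phi t).2 ∧
    t.2.1.coeff (n - d) = (phi t).1.coeff n ∧ t.2.2.coeff (2 * (n - d)) = (phi t).2.coeff (2 * n) := by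
  simp only [Dst, Finset.mem_product, mem_Mon, mem_Ysm, mem_PL] at ht
  obtain ⟨⟨⟨hm, hdeg⟩, hr⟩, ⟨hQ, hP⟩, hs⟩ := ht
  have hr' : t.1.2.degree < t.1.1.degree := by
    rw [degree_eq_natDegree hm.ne_zero, hdeg]; exact hr
  subst hdeg
  obtain ⟨a, b, c⟩ := dec_back hm hd hr' hQ hP
  obtain ⟨_, _, c1, c2⟩ := dec_degree c hm hd hr' a b
  exact ⟨hm, rfl, hr', hs, a, b, c, c1, c2⟩

lemma sum_dec (n : ℕ) (w : F[X] × F[X] → ℚ)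
    (hw : ∀ x : F[X] × F[X], (x.1.coeff n) ^ 2 + 4 * x.2.coeff (2 * n) = 0 → w x = 0) :
    ∑ x ∈ PL F (n + 1) ×ˢ PL F (2 * n + 1), w x =
      ∑ d ∈ Finset.range (n + 1), ∑ t ∈ Dst F n d, w (phi t) := by
  rw [← Finset.sum_sigma (Finset.range (n + 1)) (fun d => Dst F n d) (fun s => w (phi s.2))]
  symm
  refine Finset.sum_of_injOn (fun s => phi s.2) ?_ ?_ ?_ (fun _ _ => rfl)
  · rintro ⟨d, t⟩ hs ⟨d', t'⟩ hs' heq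
    simp only [Finset.coe_sigma, Set.mem_sigma_iff, Finset.mem_coe, Finset.mem_range] at hs hs'
    simp only at heq
    obtain ⟨hm, hd, hr, hsm, -, -, hdec, -⟩ := Dst_spec (by omega) hs.2
    obtain ⟨hm', hd', hr', hsm', -, -, hdec', -⟩ := Dst_spec (by omega) hs'.2
    rw [heq] at hdec
    obtain ⟨e1, e2, e3, e4⟩ := dec_unique hdec hdec' hm hm' hr hr' hsm hsm'
    obtain ⟨⟨h, r⟩, ⟨Q, P⟩⟩ := t
    obtain ⟨⟨h', r'⟩, ⟨Q', P'⟩⟩ := t'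
    simp only at e1 e2 e3 e4 hd hd'
    subst e1 e2 e3 e4
    subst hd hd'
    rfl
  · rintro ⟨d, t⟩ hs
    simp only [Finset.coe_sigma, Set.mem_sigma_iff, Finset.mem_coe, Finset.mem_range] at hs
    obtain ⟨hm, hd, hr, hsm, b1, b2, hdec, -⟩ := Dst_spec (by omega) hs.2
    simp only [Finset.coe_product, Set.mem_prod, Finset.mem_coe, mem_PL_succ]
    exact ⟨b1, b2⟩
  · rintro ⟨Q, P⟩ hx hn
    simp only [Finset.mem_product, mem_PL_succ] at hx
    refine hw _ ?_
    by_contra hne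
    obtain ⟨h, r, Q', P', hm, hd, hr, hQ', hP', hs, hdec⟩ := dec_exists n Q P hx.1 hx.2 hne
    refine hn ⟨⟨h.natDegree, ((h, r), (Q', P'))⟩, ?_, ?_⟩
    · simp only [Finset.coe_sigma, Set.mem_sigma_iff, Finset.mem_coe, Finset.mem_range, Dst,
        Finset.mem_product, mem_Mon, mem_Ysm, mem_PL]
      refine ⟨by omega, ⟨⟨hm, trivial⟩, ?_⟩, ⟨hQ', hP'⟩, hs⟩
      rwa [degree_eq_natDegree hm.ne_zero] at hr
    · obtain ⟨e1, e2⟩ := hdec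
      simp only [phi, Prod.mk.injEq]
      constructor
      · linear_combination e1
      · linear_combination e2 + r * e1

/-- value at infinity -/
def chiI (n : ℕ) (x : F[X] × F[X]) : ℚ := chi (x.1.coeff n) (x.2.coeff (2 * n))
/-- value at zero -/
def chiO (x : F[X] × F[X]) : ℚ := chi (x.1.coeff 0) (x.2.coeff 0)

lemma chiI_phi {n d : ℕ} (hd : d ≤ n) {t : (F[X] × F[X]) × (F[X] × F[X])} (ht : t ∈ Dst F n d) :
    chiI n (phi t) = chiI (n - d) t.2 := by
  obtain ⟨-, -, -, -, -, -, -, c1, c2⟩ := Dst_spec hd ht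
  simp only [chiI, c1, c2]

lemma chiO_phi {t : (F[X] × F[X]) × (F[X] × F[X])} (h0 : t.1.1.coeff 0 ≠ 0) :
    chiO (phi t) = chiO t.2 := by
  symm
  refine chi_change (r := t.1.2.coeff 0) h0 ?_ ?_
  · simp [phi, mul_coeff_zero]
  · simp [phi, mul_coeff_zero, sq]; ring

lemma chiO_phi_zero {t : (F[X] × F[X]) × (F[X] × F[X])} (h0 : t.1.1.coeff 0 = 0) :
    chiO (phi t) = 0 := by
  refine chi_double ?_
  simp [phi, mul_coeff_zero, sq, h0]; ring

variable (F) in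
/-- sum of squared values at infinity -/
def S1 (n : ℕ) : ℚ := ∑ x ∈ Ysm F n, chiI n x ^ 2
variable (F) in
/-- mixed sum -/
def S2 (n : ℕ) : ℚ := ∑ x ∈ Ysm F n, chiI n x * chiO x

lemma T1_eq (n : ℕ) : ∑ x ∈ PL F (n + 1) ×ˢ PL F (2 * n + 1), chiI n x ^ 2 =
    (Fintype.card F : ℚ) ^ (3 * n) * ((Fintype.card F : ℚ) ^ 2 - Fintype.card F) := by
  rw [Finset.sum_product]
  simp only [chiI]
  have h1 : ∀ Q : F[X], ∑ P ∈ PL F (2 * n + 1), chi (Q.coeff n) (P.coeff (2 * n)) ^ 2 = _ :=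
    fun Q => sum_PL_top (2 * n) (fun c => chi (Q.coeff n) c ^ 2)
  simp only [h1, ← Finset.mul_sum]
  rw [sum_PL_top n (fun b => ∑ c, chi b c ^ 2), sum_chi_sq]
  ring

lemma T2_succ (n : ℕ) : ∑ x ∈ PL F (n + 1 + 1) ×ˢ PL F (2 * (n + 1) + 1), chiI (n + 1) x * chiO x = 0 := by
  rw [Finset.sum_product]
  refine Finset.sum_eq_zero fun Q _ => ?_
  exact sum_PL_bot (by omega) (fun c => chi (Q.coeff (n + 1)) c) (fun c => chi (Q.coeff 0) c) (sum_chi _)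

lemma T2_zero : ∑ x ∈ PL F (0 + 1) ×ˢ PL F (2 * 0 + 1), chiI 0 x * chiO x =
    ((Fintype.card F : ℚ) ^ 2 - Fintype.card F) := by
  have := T1_eq (F := F) 0
  simp only [mul_zero, pow_zero, one_mul] at this
  rw [← this]
  exact Finset.sum_congr rfl fun x _ => by simp [chiI, chiO, sq]

lemma T1_S1 (n : ℕ) : ∑ x ∈ PL F (n + 1) ×ˢ PL F (2 * n + 1), chiI n x ^ 2 =
    ∑ d ∈ Finset.range (n + 1), (Fintype.card F : ℚ) ^ (2 * d) * S1 F (n - d) := by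
  rw [sum_dec n (fun x => chiI n x ^ 2) (fun x hx => by
    simp only [chiI, chi_double hx]; norm_num)]
  refine Finset.sum_congr rfl fun d hd => ?_
  rw [Finset.sum_congr rfl (fun t ht => by
    rw [chiI_phi (by have := Finset.mem_range.1 hd; omega) ht] : ∀ t ∈ Dst F n d, _ = chiI (n - d) t.2 ^ 2)]
  rw [Dst, Finset.sum_product, S1]
  simp only [Finset.sum_const, Finset.card_product, card_Mon, card_PL, nsmul_eq_mul]
  push_cast; ring

open Classical in
lemma T2_S2 (n : ℕ) : ∑ x ∈ PL F (n + 1) ×ˢ PL F (2 * n + 1), chiI n x * chiO x =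
    ∑ d ∈ Finset.range (n + 1), ((Mon F d).filter (fun h => h.coeff 0 ≠ 0)).card *
      (Fintype.card F : ℚ) ^ d * S2 F (n - d) := by
  rw [sum_dec n (fun x => chiI n x * chiO x) (fun x hx => by
    simp only [chiI, chi_double hx]; norm_num)]
  refine Finset.sum_congr rfl fun d hd => ?_
  rw [Finset.sum_congr rfl (fun t ht => by
    rw [chiI_phi (by have := Finset.mem_range.1 hd; omega) ht]
    by_cases h0 : t.1.1.coeff 0 = 0
    · rw [chiO_phi_zero h0, if_pos h0]; ring
    · rw [chiO_phi h0, if_neg h0] : ∀ t ∈ Dst F n d, _ =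
      if t.1.1.coeff 0 = 0 then 0 else chiI (n - d) t.2 * chiO t.2)]
  rw [Dst, Finset.sum_product, Finset.sum_product]
  have : ∀ h : F[X], (∑ y ∈ Ysm F (n - d), if h.coeff 0 = 0 then 0 else chiI (n - d) y * chiO y) =
    if h.coeff 0 ≠ 0 then S2 F (n - d) else 0 := by
    intro h
    by_cases h0 : h.coeff 0 = 0 <;> simp [h0, S2]
  simp only [this, Finset.sum_const, card_PL, nsmul_eq_mul, ← Finset.mul_sum]
  rw [← Finset.sum_filter, Finset.sum_const, nsmul_eq_mul]
  push_cast; ring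

lemma S1_eq (n : ℕ) : S1 F (n + 1) = ((Fintype.card F : ℚ) ^ 2 - Fintype.card F) *
    ((Fintype.card F : ℚ) ^ (3 * n + 3) - (Fintype.card F : ℚ) ^ (3 * n + 2)) := by
  have h1 := (T1_eq (F := F) (n + 1)).symm.trans (T1_S1 (n + 1))
  have h0 := (T1_eq (F := F) n).symm.trans (T1_S1 n)
  rw [Finset.sum_range_succ'] at h1
  have : ∀ d, (Fintype.card F : ℚ) ^ (2 * (d + 1)) * S1 F (n + 1 - (d + 1)) =
    (Fintype.card F : ℚ) ^ 2 * ((Fintype.card F : ℚ) ^ (2 * d) * S1 F (n - d)) := by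
    intro d; rw [Nat.add_sub_add_right]; ring
  simp only [this, ← Finset.mul_sum, ← h0] at h1
  simp only [mul_zero, pow_zero, one_mul, Nat.sub_zero] at h1
  rw [← sub_eq_iff_eq_add'] at h1
  rw [← h1]; ring

lemma S2_rec (n : ℕ) : S2 F (n + 1) = - ∑ d ∈ Finset.range (n + 1),
    (Fintype.card F : ℚ) ^ (2 * d + 1) * ((Fintype.card F : ℚ) - 1) * S2 F (n - d) := by
  classical
  have h1 := (T2_succ (F := F) n).symm.trans (T2_S2 (n + 1))
  rw [Finset.sum_range_succ'] at h1
  have h0 : ((Mon F 0).filter (fun h => h.coeff 0 ≠ 0)) = {1} := by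
    ext h; simp only [Finset.mem_filter, mem_Mon, Finset.mem_singleton]
    constructor
    · rintro ⟨⟨hm, hd⟩, -⟩; exact hm.natDegree_eq_zero.1 hd
    · rintro rfl; simp
  rw [h0] at h1
  have : ∀ d, (((Mon F (d + 1)).filter (fun h => h.coeff 0 ≠ 0)).card : ℚ) *
      (Fintype.card F : ℚ) ^ (d + 1) * S2 F (n + 1 - (d + 1)) =
      (Fintype.card F : ℚ) ^ (2 * d + 1) * ((Fintype.card F : ℚ) - 1) * S2 F (n - d) := by
    intro d; rw [card_Mon_nonzero, Nat.add_sub_add_right]; ring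
  simp only [this] at h1
  simp only [Finset.card_singleton, Nat.cast_one, pow_zero, one_mul, Nat.sub_zero] at h1
  linarith

lemma S2_zero : S2 F 0 = ((Fintype.card F : ℚ) ^ 2 - Fintype.card F) := by
  classical
  have h1 := (T2_zero (F := F)).symm.trans (T2_S2 0)
  have h0 : ((Mon F 0).filter (fun h => h.coeff 0 ≠ 0)) = {1} := by
    ext h; simp only [Finset.mem_filter, mem_Mon, Finset.mem_singleton]
    constructor
    · rintro ⟨⟨hm, hd⟩, -⟩; exact hm.natDegree_eq_zero.1 hd
    · rintro rfl; simp
  rw [Finset.sum_range_one, h0] at h1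
  simpa using h1.symm

lemma S2_eq (n : ℕ) : S2 F (n + 1) = - ((Fintype.card F : ℚ) ^ (n + 1) * ((Fintype.card F : ℚ) - 1) *
    ((Fintype.card F : ℚ) ^ 2 - Fintype.card F)) := by
  induction n with
  | zero => rw [S2_rec]; simp [S2_zero]
  | succ n ih =>
    rw [S2_rec, Finset.sum_range_succ']
    have h0 := S2_rec (F := F) n
    have : ∀ d, (Fintype.card F : ℚ) ^ (2 * (d + 1) + 1) * ((Fintype.card F : ℚ) - 1) *
        S2 F (n + 1 - (d + 1)) = (Fintype.card F : ℚ) ^ 2 *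
        ((Fintype.card F : ℚ) ^ (2 * d + 1) * ((Fintype.card F : ℚ) - 1) * S2 F (n - d)) := by
      intro d; rw [Nat.add_sub_add_right]; ring
    simp only [this, ← Finset.mul_sum]
    simp only [Nat.sub_zero]
    rw [ih] at h0 ⊢
    generalize (∑ i ∈ Finset.range (n + 1), (Fintype.card F : ℚ) ^ (2 * i + 1) *
      ((Fintype.card F : ℚ) - 1) * S2 F (n - i)) = U at *
    linear_combination -(Fintype.card F : ℚ) ^ 2 * h0

end countLemmas

section globalLemmas
variable {F : Type*} [Field F]

/-- linear action on the plane -/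
def act (A : Matrix (Fin 2) (Fin 2) F) (v : F × F) : F × F :=
  (A 0 0 * v.1 + A 0 1 * v.2, A 1 0 * v.1 + A 1 1 * v.2)

lemma act_act {A B : Matrix (Fin 2) (Fin 2) F} (h : A * B = 1) (v : F × F) :
    act A (act B v) = v := by
  have m00 : A 0 0 * B 0 0 + A 0 1 * B 1 0 = 1 := by
    have := congrFun (congrFun h 0) 0; simpa [Matrix.mul_apply, Fin.sum_univ_two] using this
  have m01 : A 0 0 * B 0 1 + A 0 1 * B 1 1 = 0 := by
    have := congrFun (congrFun h 0) 1; simpa [Matrix.mul_apply, Fin.sum_univ_two] using this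
  have m10 : A 1 0 * B 0 0 + A 1 1 * B 1 0 = 0 := by
    have := congrFun (congrFun h 1) 0; simpa [Matrix.mul_apply, Fin.sum_univ_two] using this
  have m11 : A 1 0 * B 0 1 + A 1 1 * B 1 1 = 1 := by
    have := congrFun (congrFun h 1) 1; simpa [Matrix.mul_apply, Fin.sum_univ_two] using this
  ext
  · simp only [act]; linear_combination v.1 * m00 + v.2 * m01
  · simp only [act]; linear_combination v.1 * m10 + v.2 * m11

/-- linear action as an equivalence -/
def actEquiv {A B : Matrix (Fin 2) (Fin 2) F} (h : A * B = 1) : F × F ≃ F × F where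
  toFun := act A
  invFun := act B
  left_inv := act_act (mul_eq_one_comm.1 h)
  right_inv := act_act h

/-- number of points above `v`, minus one -/
def chiV (n : ℕ) (x : F[X] × F[X]) (v : F × F) : ℚ :=
  chi (hev n x.1 v.1 v.2) (hev (2 * n) x.2 v.1 v.2)

lemma chiV_iso {n : ℕ} {A : Matrix (Fin 2) (Fin 2) F} {e : F} {r : F[X]} {x y : F[X] × F[X]}
    (h : IsoN n A e r x.1 x.2 y.1 y.2) (v : F × F) : chiV n x v = chiV n y (act A v) := by
  obtain ⟨h1, h2⟩ := isoN_hev h v.1 v.2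
  exact chi_change h.1 h1 h2

lemma chiV_scale (n : ℕ) (x : F[X] × F[X]) {l : F} (hl : l ≠ 0) (v : F × F) :
    chiV n x (l * v.1, l * v.2) = chiV n x v := by
  symm
  refine chi_change (r := 0) (pow_ne_zero n hl) ?_ ?_
  · simp only [hev_scale]; ring
  · simp only [hev_scale]; ring

lemma chiV_zero {n : ℕ} (hn : n ≠ 0) (x : F[X] × F[X]) : chiV n x (0, 0) = 0 := by
  have h : ∀ (m : ℕ), m ≠ 0 → ∀ (p : F[X]), hev m p (0 : F) 0 = 0 := by
    intro m hm p
    have := hev_scale m p (0 : F) 0 0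
    simpa [hm] using this
  simp [chiV, h n hn, h (2 * n) (by omega), chi]

variable [Fintype F]

/-- sum over the plane -/
def Atot (n : ℕ) (x : F[X] × F[X]) : ℚ := ∑ v : F × F, chiV n x v
/-- sum over the projective line -/
def proj (n : ℕ) (x : F[X] × F[X]) : ℚ := chiV n x (1, 0) + ∑ t : F, chiV n x (t, 1)

lemma Atot_eq {n : ℕ} (hn : n ≠ 0) (x : F[X] × F[X]) :
    Atot n x = ((Fintype.card F : ℚ) - 1) * proj n x := by
  classical
  have hcard : ((Finset.univ.erase (0 : F)).card : ℚ) = (Fintype.card F : ℚ) - 1 := by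
    rw [Finset.card_erase_of_mem (Finset.mem_univ _), Finset.card_univ,
      Nat.cast_sub Fintype.card_pos]; simp
  rw [Atot, Fintype.sum_prod_type_right, ← Finset.add_sum_erase _ _ (Finset.mem_univ (0 : F)),
    ← Finset.add_sum_erase _ _ (Finset.mem_univ (0 : F)), chiV_zero hn]
  have h1 : ∀ a ∈ Finset.univ.erase (0 : F), chiV n x (a, 0) = chiV n x (1, 0) := by
    intro a ha
    have := chiV_scale n x (Finset.ne_of_mem_erase ha) (1, 0)
    simpa using this
  have h2 : ∀ b ∈ Finset.univ.erase (0 : F), ∑ a, chiV n x (a, b) = ∑ t, chiV n x (t, 1) := by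
    intro b hb
    have hb := Finset.ne_of_mem_erase hb
    refine (Fintype.sum_equiv (Equiv.mulLeft₀ b hb) _ _ fun t => ?_).symm
    have := chiV_scale n x hb (t, 1)
    simpa using this.symm
  rw [Finset.sum_congr rfl h1, Finset.sum_congr rfl h2, Finset.sum_const, Finset.sum_const,
    nsmul_eq_mul, nsmul_eq_mul, hcard, proj]
  ring

lemma card_sub_one_ne : (Fintype.card F : ℚ) - 1 ≠ 0 := by
  have : 1 < Fintype.card F := Fintype.one_lt_card
  have : (1 : ℚ) < Fintype.card F := by exact_mod_cast this
  linarith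

lemma Atot_iso {n : ℕ} {A B : Matrix (Fin 2) (Fin 2) F} (hAB : A * B = 1) {e : F} {r : F[X]}
    {x y : F[X] × F[X]} (h : IsoN n A e r x.1 x.2 y.1 y.2) : Atot n x = Atot n y :=
  Fintype.sum_equiv (actEquiv hAB) _ _ (chiV_iso h)

lemma proj_iso {n : ℕ} (hn : n ≠ 0) {A B : Matrix (Fin 2) (Fin 2) F} (hAB : A * B = 1) {e : F} {r : F[X]}
    {x y : F[X] × F[X]} (h : IsoN n A e r x.1 x.2 y.1 y.2) : proj n x = proj n y := by
  have := Atot_iso hAB h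
  rw [Atot_eq hn, Atot_eq hn] at this
  exact mul_left_cancel₀ card_sub_one_ne this

lemma chiV_inf (n : ℕ) (x : F[X] × F[X]) : chiV n x (1, 0) = chiI n x := by
  simp [chiV, chiI, hev_one_zero]

lemma nPoints_eq {g : ℕ} {x : F[X] × F[X]} (hQ : x.1.natDegree ≤ g + 1)
    (hP : x.2.natDegree ≤ 2 * (g + 1)) :
    ((Fintype.card F : ℚ) + 1) - (nPoints g F x.1 x.2 : ℚ) = - proj (g + 1) x := by
  classical
  have h1 : Nat.card {xy : F × F // xy.2 ^ 2 + aeval xy.1 x.1 * xy.2 = aeval xy.1 x.2} =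
      ∑ t : F, Nat.card {y : F // y ^ 2 + aeval t x.1 * y = aeval t x.2} := by
    rw [← Nat.card_sigma]
    refine Nat.card_congr ⟨fun z => ⟨z.1.1, ⟨z.1.2, z.2⟩⟩, fun z => ⟨(z.1, z.2.1), z.2.2⟩, ?_, ?_⟩
    · intro z; rfl
    · intro z; rfl
  have h2 : ∀ t : F, chiV (g + 1) x (t, 1) =
      (Nat.card {y : F // y ^ 2 + aeval t x.1 * y = aeval t x.2} : ℚ) - 1 := by
    intro t
    simp only [chiV, hev_one_right hQ, hev_one_right hP, chi]
  simp only [nPoints, h1, proj, h2, chiV_inf, chiI, chi]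
  simp only [Finset.sum_sub_distrib, Finset.sum_const, Finset.card_univ, nsmul_eq_mul, mul_one]
  push_cast
  simp only [Algebra.algebraMap_self, RingHom.id_apply, show 2 * g + 2 = 2 * (g + 1) by ring]
  ring

open Classical in
variable (F) in
/-- smooth models -/
def XM (n : ℕ) : Finset (F[X] × F[X]) :=
  (PL F (n + 1) ×ˢ PL F (2 * n + 1)).filter (fun x => SmoothH n x.1 x.2)

lemma mem_XM {n : ℕ} {x : F[X] × F[X]} : x ∈ XM F n ↔
    (x.1.natDegree ≤ n ∧ x.2.natDegree ≤ 2 * n) ∧ SmoothH n x.1 x.2 := by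
  simp [XM, mem_PL_succ]

lemma chiI_of_not_smoothH {n : ℕ} {x : F[X] × F[X]} (hx : x ∈ Ysm F n) (hx' : x ∉ XM F n) :
    chiI n x = 0 := by
  rw [mem_Ysm] at hx
  obtain ⟨⟨hQ, hP⟩, hs⟩ := hx
  have hns : ¬ SmoothH n x.1 x.2 := fun h => hx' (mem_XM.2 ⟨⟨hQ, hP⟩, h⟩)
  rw [smoothH_iff hQ hP] at hns
  have h3 : ¬ SmoothChartF (reflect n x.1) (reflect (2 * n) x.2) := fun h => hns ⟨hs, h⟩
  rw [smoothChartF_iff (natDegree_reflect_le' hQ) (natDegree_reflect_le' hP)] at h3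
  push Not at h3
  obtain ⟨t, y, hsing⟩ := h3
  by_cases ht : t = 0
  · rw [singAt_affine_iff (natDegree_reflect_le' hQ) (natDegree_reflect_le' hP)] at hsing
    obtain ⟨e1, e2, -⟩ := hsing
    rw [ht, hev_reflect hQ, hev_one_zero] at e1 e2
    rw [hev_reflect hP, hev_one_zero] at e1
    refine chi_double ?_
    apply (algebraMap F (AlgebraicClosure F)).injective
    rw [map_add, map_pow, map_mul, map_ofNat, map_zero]
    linear_combination (2 * y + algebraMap F (AlgebraicClosure F) (x.1.coeff n)) * e2 - 4 * e1
  · exfalso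
    rw [singAt_reflect] at hsing
    have := singAt_scale (inv_ne_zero ht) hsing
    rw [inv_mul_cancel₀ ht] at this
    exact (smoothChartF_iff hQ hP).1 hs _ _ this

lemma sum_XM (n : ℕ) (f : F[X] × F[X] → ℚ) :
    ∑ x ∈ XM F n, chiI n x * f x = ∑ x ∈ Ysm F n, chiI n x * f x := by
  refine Finset.sum_subset ?_ ?_
  · intro x hx
    rw [mem_XM] at hx
    exact mem_Ysm.2 ⟨hx.1, ((smoothH_iff hx.1.1 hx.1.2).1 hx.2).1⟩
  · intro x hx hx'
    rw [chiI_of_not_smoothH hx hx', zero_mul]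

/-- transform a model -/
def psiP (n : ℕ) (A : Matrix (Fin 2) (Fin 2) F) (x : F[X] × F[X]) : F[X] × F[X] :=
  (psiF n A x.1, psiF (2 * n) A x.2)

lemma isoN_psiP (n : ℕ) (A : Matrix (Fin 2) (Fin 2) F) (x : F[X] × F[X]) :
    IsoN n A 1 0 (psiP n A x).1 (psiP n A x).2 x.1 x.2 := by
  refine ⟨one_ne_zero, by simp, ?_, ?_⟩ <;> simp [psiP]

lemma psiP_mem {n : ℕ} {A B : Matrix (Fin 2) (Fin 2) F} (hAB : A * B = 1) {x : F[X] × F[X]}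
    (hx : x ∈ XM F n) : psiP n A x ∈ XM F n := by
  rw [mem_XM] at hx
  refine mem_XM.2 ⟨⟨natDegree_psiF_le _ _ _, natDegree_psiF_le _ _ _⟩, ?_⟩
  exact isoN_smooth (mul_eq_one_comm.1 hAB) (isoN_inv hAB hx.1.1 hx.1.2 (isoN_psiP n A x)) hx.2

lemma psiP_psiP {n : ℕ} {A B : Matrix (Fin 2) (Fin 2) F} (hAB : A * B = 1) {x : F[X] × F[X]}
    (hx : x ∈ XM F n) : psiP n B (psiP n A x) = x := by
  rw [mem_XM] at hx
  simp only [psiP, psiF_psiF, hAB, psiF_one hx.1.1, psiF_one hx.1.2]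

lemma sum_psiP {n : ℕ} {A B : Matrix (Fin 2) (Fin 2) F} (hAB : A * B = 1) (f : F[X] × F[X] → ℚ) :
    ∑ x ∈ XM F n, f (psiP n A x) = ∑ x ∈ XM F n, f x :=
  Finset.sum_bij' (fun x _ => psiP n A x) (fun x _ => psiP n B x)
    (fun _ hx => psiP_mem hAB hx) (fun _ hx => psiP_mem (mul_eq_one_comm.1 hAB) hx)
    (fun _ hx => psiP_psiP hAB hx) (fun _ hx => psiP_psiP (mul_eq_one_comm.1 hAB) hx)
    (fun _ _ => rfl)

lemma exists_act {v : F × F} (hv : v ≠ 0) :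
    ∃ A B : Matrix (Fin 2) (Fin 2) F, A * B = 1 ∧ act A (1, 0) = v := by
  obtain ⟨a, b⟩ := v
  by_cases ha : a = 0
  · have hb : b ≠ 0 := by rintro rfl; exact hv (by rw [ha]; rfl)
    refine ⟨!![a, 1; b, 0], !![0, b⁻¹; 1, 0], ?_, by simp [act]⟩
    rw [ha, Matrix.mul_fin_two, Matrix.one_fin_two]; simp [hb]
  · refine ⟨!![a, 0; b, 1], !![a⁻¹, 0; -(b * a⁻¹), 1], ?_, by simp [act]⟩
    rw [Matrix.mul_fin_two, Matrix.one_fin_two]; simp [ha]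

lemma sum_chiV_Atot (n : ℕ) {v : F × F} (hv : v ≠ 0) :
    ∑ x ∈ XM F n, chiV n x v * Atot n x = ∑ x ∈ XM F n, chiI n x * Atot n x := by
  obtain ⟨A, B, hAB, hA⟩ := exists_act hv
  rw [← sum_psiP hAB (fun x => chiI n x * Atot n x)]
  refine Finset.sum_congr rfl fun x _ => ?_
  rw [← chiV_inf, chiV_iso (isoN_psiP n A x), hA, Atot_iso hAB (isoN_psiP n A x)]

lemma sum_Atot_sq {n : ℕ} (hn : n ≠ 0) : ∑ x ∈ XM F n, Atot n x ^ 2 =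
    ((Fintype.card F : ℚ) ^ 2 - 1) * ∑ x ∈ XM F n, chiI n x * Atot n x := by
  classical
  have h1 : ∀ x, Atot n x ^ 2 = ∑ v : F × F, chiV n x v * Atot n x := by
    intro x; rw [← Finset.sum_mul, sq]; rfl
  simp only [h1]
  rw [Finset.sum_comm, ← Finset.add_sum_erase _ _ (Finset.mem_univ (0 : F × F)),
    Finset.sum_congr rfl (fun v hv => sum_chiV_Atot n (Finset.ne_of_mem_erase hv))]
  have h0 : ∀ x : F[X] × F[X], chiV n x 0 = 0 := chiV_zero hn
  simp only [h0, zero_mul, Finset.sum_const_zero, zero_add, Finset.sum_const, nsmul_eq_mul]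
  rw [Finset.card_erase_of_mem (Finset.mem_univ _), Finset.card_univ,
      Nat.cast_sub Fintype.card_pos, Fintype.card_prod]
  push_cast; ring

lemma sum_chiI_chiV (n : ℕ) (t : F) : ∑ x ∈ XM F n, chiI n x * chiV n x (t, 1) = S2 F n := by
  have hAB : (!![1, t; 0, 1] : Matrix (Fin 2) (Fin 2) F) * !![1, -t; 0, 1] = 1 := by
    rw [Matrix.mul_fin_two, Matrix.one_fin_two]; simp
  rw [S2, ← sum_XM, ← sum_psiP hAB (fun x => chiI n x * chiO x)]
  refine Finset.sum_congr rfl fun x hx => ?_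
  have hx' := mem_XM.1 (psiP_mem hAB hx)
  have e1 : chiO (psiP n !![1, t; 0, 1] x) = chiV n (psiP n !![1, t; 0, 1] x) (0, 1) := by
    simp only [chiO, chiV, hev_one_right hx'.1.1, hev_one_right hx'.1.2, aeval_def, Algebra.algebraMap_self,
      eval₂_id, coeff_zero_eq_eval_zero]
  rw [e1, ← chiV_inf, ← chiV_inf, chiV_iso (isoN_psiP n _ x), chiV_iso (isoN_psiP n _ x)]
  simp [act]

/-- The main count over all models. -/
lemma sum_proj_sq (g : ℕ) : ∑ x ∈ XM F (g + 1), proj (g + 1) x ^ 2 =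
    ((Fintype.card F : ℚ) ^ 2 - 1) * ((Fintype.card F : ℚ) ^ 2 - Fintype.card F) *
      (Fintype.card F : ℚ) ^ (g + 2) * ((Fintype.card F : ℚ) ^ (2 * g) - 1) := by
  have hn : g + 1 ≠ 0 := by omega
  have h1 := sum_Atot_sq (F := F) hn
  have h2 : ∑ x ∈ XM F (g + 1), chiI (g + 1) x * proj (g + 1) x =
      S1 F (g + 1) + Fintype.card F * S2 F (g + 1) := by
    simp only [proj, mul_add, Finset.mul_sum, Finset.sum_add_distrib, chiV_inf]
    rw [Finset.sum_comm]
    simp only [sum_chiI_chiV, Finset.sum_const, Finset.card_univ, nsmul_eq_mul]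
    rw [sum_XM, S1]
    simp only [sq]
  simp only [Atot_eq hn, mul_pow, ← Finset.mul_sum, mul_left_comm (chiI _ _)] at h1
  rw [h2, S1_eq, S2_eq] at h1
  refine mul_left_cancel₀ (pow_ne_zero 2 (card_sub_one_ne (F := F))) (h1.trans ?_)
  ring

end globalLemmas

section orbitLemmas
variable {F : Type*} [Field F]

lemma hypEq_spec {g : ℕ} (M : HypEq F g) : M.1.1.natDegree ≤ g + 1 ∧
    M.1.2.natDegree ≤ 2 * (g + 1) ∧ SmoothH (g + 1) M.1.1 M.1.2 := isHypModel_iff.1 M.2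

/-- isomorphisms as triples -/
def IsoSet {g : ℕ} (M₁ M₂ : HypEq F g) : Type _ :=
  {t : Matrix.GeneralLinearGroup (Fin 2) F × F × F[X] //
    IsoTriple g (t.1 : Matrix (Fin 2) (Fin 2) F) t.2.1 t.2.2 M₁.1.1 M₁.1.2 M₂.1.1 M₂.1.2}

variable (F) in
/-- all triples -/
def TripSet (g : ℕ) : Type _ :=
  {t : Matrix.GeneralLinearGroup (Fin 2) F × F × F[X] // t.2.1 ≠ 0 ∧ t.2.2.natDegree ≤ g + 1}

lemma isomRel_iff {g : ℕ} (M₁ M₂ : HypEq F g) : IsomRel g M₁ M₂ ↔ Nonempty (IsoSet M₁ M₂) :=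
  ⟨fun ⟨A, e, r, h⟩ => ⟨⟨(A, e, r), h⟩⟩, fun ⟨⟨(A, e, r), h⟩⟩ => ⟨A, e, r, h⟩⟩

lemma gl_mul_inv (A : Matrix.GeneralLinearGroup (Fin 2) F) :
    (A : Matrix (Fin 2) (Fin 2) F) * ((A⁻¹ : Matrix.GeneralLinearGroup (Fin 2) F) :
      Matrix (Fin 2) (Fin 2) F) = 1 := by
  rw [← Units.val_mul, mul_inv_cancel, Units.val_one]

/-- composition -/
def isoComp {g : ℕ} {M₁ M₂ M₃ : HypEq F g} (s : IsoSet M₁ M₂) (t : IsoSet M₂ M₃) : IsoSet M₁ M₃ :=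
  ⟨(t.1.1 * s.1.1, s.1.2.1 * t.1.2.1, C t.1.2.1 * s.1.2.2 + psiF (g + 1) s.1.1 t.1.2.2), by
    have := isoN_comp (isoTriple_iff.1 s.2) (isoTriple_iff.1 t.2)
    exact this⟩

/-- inverse -/
def isoInv {g : ℕ} {M₁ M₂ : HypEq F g} (s : IsoSet M₁ M₂) : IsoSet M₂ M₁ :=
  ⟨(s.1.1⁻¹, s.1.2.1⁻¹, -(C s.1.2.1⁻¹ * psiF (g + 1)
      ((s.1.1⁻¹ : Matrix.GeneralLinearGroup (Fin 2) F) : Matrix (Fin 2) (Fin 2) F) s.1.2.2)),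
    isoN_inv (gl_mul_inv s.1.1) (hypEq_spec M₂).1 (hypEq_spec M₂).2.1 (isoTriple_iff.1 s.2)⟩

/-- identity -/
def isoRefl {g : ℕ} (M : HypEq F g) : IsoSet M M :=
  ⟨(1, 1, 0), by
    refine isoTriple_iff.2 ⟨one_ne_zero, by simp, ?_, ?_⟩
    · simp [psiF_one (hypEq_spec M).1]
    · simp [psiF_one (hypEq_spec M).2.1]⟩

lemma isomRel_equivalence (g : ℕ) : Equivalence (IsomRel (F := F) g) where
  refl M := (isomRel_iff _ _).2 ⟨isoRefl M⟩
  symm h := by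
    rw [isomRel_iff] at *
    exact h.map isoInv
  trans h h' := by
    rw [isomRel_iff] at *
    exact ⟨isoComp h.some h'.some⟩

lemma isoComp_injective {g : ℕ} {M₁ M₂ : HypEq F g} (M₃ : HypEq F g) (s : IsoSet M₁ M₂) :
    Function.Injective (isoComp s : IsoSet M₂ M₃ → IsoSet M₁ M₃) := by
  rintro ⟨⟨A, e, r⟩, h⟩ ⟨⟨A', e', r'⟩, h'⟩ heq
  have h3 := congrArg Subtype.val heq
  simp only [isoComp, Prod.mk.injEq] at h3
  obtain ⟨h1, h2, h3⟩ := h3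
  have e1 : A = A' := mul_right_cancel h1
  have e2 : e = e' := mul_left_cancel₀ s.2.1 h2
  subst e1 e2
  have h4 := congrArg (psiF (g + 1) ((s.1.1⁻¹ : Matrix.GeneralLinearGroup (Fin 2) F) :
    Matrix (Fin 2) (Fin 2) F)) (add_left_cancel h3)
  rw [psiF_psiF, psiF_psiF, gl_mul_inv, psiF_one h.2.1, psiF_one h'.2.1] at h4
  subst h4
  rfl

variable [Fintype F]

/-- product description of the set of triples -/
def tripEquiv (g : ℕ) : TripSet F g ≃ Matrix.GeneralLinearGroup (Fin 2) F × {e : F // e ≠ 0} ×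
    {r : F[X] // r ∈ PL F (g + 2)} where
  toFun t := (t.1.1, ⟨t.1.2.1, t.2.1⟩, ⟨t.1.2.2, mem_PL_succ.2 t.2.2⟩)
  invFun t := ⟨(t.1, t.2.1.1, t.2.2.1), t.2.1.2, mem_PL_succ.1 t.2.2.2⟩
  left_inv _ := rfl
  right_inv _ := rfl

instance (g : ℕ) : Finite (TripSet F g) := Finite.of_equiv _ (tripEquiv g).symm

lemma card_TripSet (g : ℕ) : (Nat.card (TripSet F g) : ℚ) =
    ((Fintype.card F : ℚ) ^ 2 - 1) * ((Fintype.card F : ℚ) ^ 2 - Fintype.card F) *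
      ((Fintype.card F : ℚ) - 1) * (Fintype.card F : ℚ) ^ (g + 2) := by
  classical
  have hq : 1 ≤ Fintype.card F := Fintype.card_pos
  rw [Nat.card_congr (tripEquiv g), Nat.card_prod, Nat.card_prod, Matrix.card_GL_field]
  have h1 : Nat.card {e : F // e ≠ 0} = Fintype.card F - 1 := by
    rw [Nat.card_eq_fintype_card, Fintype.card_subtype_compl, Fintype.card_subtype_eq]
  have h2 : Nat.card {r : F[X] // r ∈ PL F (g + 2)} = Fintype.card F ^ (g + 2) := by
    rw [← card_PL]; simp
  rw [h1, h2]
  simp only [Fin.prod_univ_two, Fin.val_zero, Fin.val_one, pow_zero, pow_one]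
  rw [Nat.cast_mul, Nat.cast_mul, Nat.cast_mul, Nat.cast_sub (Nat.one_le_pow _ _ hq),
    Nat.cast_sub (Nat.le_self_pow two_ne_zero _), Nat.cast_sub hq]
  push_cast; ring

/-- forget the equations -/
def toTrip {g : ℕ} {M₁ M₂ : HypEq F g} (t : IsoSet M₁ M₂) : TripSet F g := ⟨t.1, t.2.1, t.2.2.1⟩

instance {g : ℕ} (M₁ M₂ : HypEq F g) : Finite (IsoSet M₁ M₂) :=
  Finite.of_injective toTrip (by
    intro s t h
    exact Subtype.ext (congrArg (fun z : TripSet F g => z.1) h))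

/-- models as a finite set -/
def hypEquiv (g : ℕ) : HypEq F g ≃ {x // x ∈ XM F (g + 1)} :=
  Equiv.subtypeEquivRight fun x => by
    rw [isHypModel_iff, mem_XM, and_assoc]

instance (g : ℕ) : Finite (HypEq F g) := Finite.of_equiv _ (hypEquiv g).symm

lemma card_isoSet_le {g : ℕ} {M₁ M₂ : HypEq F g} (M₃ : HypEq F g) (s : IsoSet M₁ M₂) :
    Nat.card (IsoSet M₂ M₃) ≤ Nat.card (IsoSet M₁ M₃) :=
  Nat.card_le_card_of_injective _ (isoComp_injective M₃ s)

lemma card_isoSet {g : ℕ} {M₁ M₂ : HypEq F g} (h : IsomRel g M₁ M₂) :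
    Nat.card (IsoSet M₁ M₂) = Nat.card (AutTriples g M₂) := by
  obtain ⟨s⟩ := (isomRel_iff _ _).1 h
  exact le_antisymm (card_isoSet_le M₂ (isoInv s)) (card_isoSet_le M₂ s)

lemma card_isoSet_zero {g : ℕ} {M₁ M₂ : HypEq F g} (h : ¬ IsomRel g M₁ M₂) :
    Nat.card (IsoSet M₁ M₂) = 0 := by
  rw [isomRel_iff, not_nonempty_iff] at h
  exact Nat.card_of_isEmpty

lemma trip_bijective {g : ℕ} (M : HypEq F g) : Function.Bijective
    (fun z : (Σ M₁ : HypEq F g, IsoSet M₁ M) => toTrip z.2) := by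
  constructor
  · rintro ⟨M₁, t, ht⟩ ⟨M₂, t', ht'⟩ h
    have h' : t = t' := congrArg (fun z : TripSet F g => z.1) h
    subst h'
    obtain ⟨e1, e2⟩ := isoN_unique (isoTriple_iff.1 ht) (isoTriple_iff.1 ht')
    have : M₁ = M₂ := Subtype.ext (Prod.ext e1 e2)
    subst this
    rfl
  · rintro ⟨⟨A, e, r⟩, he, hr⟩
    obtain ⟨Q, P, hQ, hP, hiso⟩ := isoN_exists (A : Matrix (Fin 2) (Fin 2) F) he hr M.1.1 M.1.2
    have hs : SmoothH (g + 1) Q P := isoN_smooth (mul_eq_one_comm.1 (gl_mul_inv A))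
      (isoN_inv (gl_mul_inv A) (hypEq_spec M).1 (hypEq_spec M).2.1 hiso) (hypEq_spec M).2.2
    exact ⟨⟨⟨(Q, P), isHypModel_iff.2 ⟨hQ, hP, hs⟩⟩, ⟨(A, e, r), hiso⟩⟩, rfl⟩

open Classical in
lemma orbit_card {g : ℕ} [Fintype (HypEq F g)] (M : HypEq F g) : Nat.card (TripSet F g) =
    (Finset.univ.filter (fun M₁ : HypEq F g => IsomRel g M₁ M)).card * Nat.card (AutTriples g M) := by
  rw [← Nat.card_congr (Equiv.ofBijective _ (trip_bijective M)), Nat.card_sigma,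
    ← Finset.sum_filter_add_sum_filter_not _ (fun M₁ : HypEq F g => IsomRel g M₁ M),
    Finset.sum_congr rfl (fun M₁ h => card_isoSet (Finset.mem_filter.1 h).2),
    Finset.sum_congr (s₁ := Finset.univ.filter (fun M₁ : HypEq F g => ¬ IsomRel g M₁ M)) rfl
      (fun M₁ h => card_isoSet_zero (Finset.mem_filter.1 h).2)]
  simp

end orbitLemmas

/-- class of a model -/
def mkC {F : Type*} [Field F] {g : ℕ} (M : HypEq F g) : HypClass F g := Quot.mk _ M

lemma mkC_eq_iff {F : Type*} [Field F] {g : ℕ} (c : HypClass F g) (M : HypEq F g) :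
    mkC M = c ↔ IsomRel g M (Quot.out c) := by
  rw [← (isomRel_equivalence g).quot_mk_eq_iff]
  have h : mkC (Quot.out c) = c := Quot.out_eq c
  constructor
  · intro h'; exact h'.trans h.symm
  · intro h'; exact Eq.trans (show mkC M = mkC (Quot.out c) from h') h

theorem main_aux (F : Type) [Field F] [Fintype F] (g : ℕ) :
    ∑ᶠ c : HypClass F g,
      ((Fintype.card F : ℚ) - 1) / (Nat.card (AutTriples g (Quot.out c)) : ℚ) *
        (((Fintype.card F : ℚ) + 1) -
          (nPoints g F (Quot.out c).1.1 (Quot.out c).1.2 : ℚ)) ^ 2 =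
      (Fintype.card F : ℚ) ^ (2 * g) - 1 := by
  classical
  have : Fintype (HypEq F g) := Fintype.ofFinite _
  have : Finite (HypClass F g) := Finite.of_surjective (Quot.mk (IsomRel g)) Quot.mk_surjective
  have : Fintype (HypClass F g) := Fintype.ofFinite _
  have hq1 : (1 : ℚ) < Fintype.card F := by exact_mod_cast Fintype.one_lt_card (α := F)
  set q : ℚ := ((Fintype.card F : ℕ) : ℚ) with hq
  have hD := card_TripSet (F := F) g
  rw [← hq] at hD
  have hA : (q ^ 2 - 1) * (q ^ 2 - q) * q ^ (g + 2) ≠ 0 := by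
    have h1 : 0 < q ^ 2 - 1 := by nlinarith
    have h2 : 0 < q ^ 2 - q := by nlinarith
    positivity
  have hD0 : (Nat.card (TripSet F g) : ℚ) ≠ 0 := by
    rw [hD]
    have : q - 1 ≠ 0 := by linarith
    have := mul_ne_zero hA this
    intro h; apply this; linear_combination h
  have key : ∀ c : HypClass F g,
      (q - 1) / (Nat.card (AutTriples g (Quot.out c)) : ℚ) *
        ((q + 1) - (nPoints g F (Quot.out c).1.1 (Quot.out c).1.2 : ℚ)) ^ 2 =
      (q - 1) / (Nat.card (TripSet F g) : ℚ) *
        ∑ M ∈ Finset.univ.filter (fun M : HypEq F g => mkC M = c), proj (g + 1) M.1 ^ 2 := by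
    intro c
    have h1 := orbit_card (Quot.out c)
    have h2 : ∑ M ∈ Finset.univ.filter (fun M : HypEq F g => mkC M = c), proj (g + 1) M.1 ^ 2 =
        (Finset.univ.filter (fun M₁ : HypEq F g => IsomRel g M₁ (Quot.out c))).card *
          proj (g + 1) (Quot.out c).1 ^ 2 := by
      rw [Finset.filter_congr (fun M _ => mkC_eq_iff c M), ← nsmul_eq_mul, ← Finset.sum_const]
      refine Finset.sum_congr rfl fun M hM => ?_
      obtain ⟨A, e, r, h⟩ := (Finset.mem_filter.1 hM).2
      rw [proj_iso (by omega) (gl_mul_inv A) (isoTriple_iff.1 h)]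
    rw [h2, hq, nPoints_eq (hypEq_spec _).1 (hypEq_spec _).2.1, h1]
    rw [h1] at hD0
    push_cast at hD0 ⊢
    have ha := left_ne_zero_of_mul hD0
    have hb := right_ne_zero_of_mul hD0
    field_simp
  rw [finsum_eq_sum_of_fintype, Finset.sum_congr rfl (fun c _ => key c), ← Finset.mul_sum]
  have hfib : ∑ c : HypClass F g, ∑ M ∈ Finset.univ.filter (fun M : HypEq F g => mkC M = c),
      proj (g + 1) M.1 ^ 2 = ∑ M : HypEq F g, proj (g + 1) M.1 ^ 2 :=
    Finset.sum_fiberwise Finset.univ mkC (fun M : HypEq F g => proj (g + 1) M.1 ^ 2)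
  rw [hfib]
  have hX : ∑ M : HypEq F g, proj (g + 1) M.1 ^ 2 = ∑ x ∈ XM F (g + 1), proj (g + 1) x ^ 2 := by
    rw [← Finset.sum_coe_sort (XM F (g + 1)) (fun x => proj (g + 1) x ^ 2)]
    exact Fintype.sum_equiv (hypEquiv (F := F) g) (fun M : HypEq F g => proj (g + 1) M.1 ^ 2)
      (fun x : {x // x ∈ XM F (g + 1)} => proj (g + 1) x.1 ^ 2) fun M => rfl
  rw [hX, sum_proj_sq, hD, ← hq]
  have h3 : q - 1 ≠ 0 := by linarith
  rw [div_mul_eq_mul_div, div_eq_iff (by rw [← hD]; exact hD0)]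
  ring

/-- Bergström's formula, verified for q = 2, g = 5 in the paper: for any
finite field F = F_q and any g ≥ 2, the weighted sum over the F_q-isomorphism classes of
hyperelliptic curves of genus g of a₁(C)²/|Aut_{F_q}(C)|, where
a₁(C) = q + 1 − |C(F_q)| is the trace of Frobenius, equals q^{2g} − 1; in particular for
q = 2 and g = 5 it equals 1023. -/
theorem stmt_17 (F : Type) [Field F] [Fintype F] (g : ℕ) (hg : 2 ≤ g) :
    ∑ᶠ c : HypClass F g,
      ((Fintype.card F : ℚ) - 1) / (Nat.card (AutTriples g (Quot.out c)) : ℚ) *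
        (((Fintype.card F : ℚ) + 1) -
          (nPoints g F (Quot.out c).1.1 (Quot.out c).1.2 : ℚ)) ^ 2 =
      (Fintype.card F : ℚ) ^ (2 * g) - 1 := by
  exact main_aux F g

end
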